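/- arXiv:1704.03311 — 8 statements merged into one kernel-verified Lean document; each statement's English description precedes it below -/
import Mathlib

section
/- Let Ξ be a finite alphabet with at least two elements, let n and b be integers with 2 ≤ b ≤ n, and let x ∈ Ξ^n be a vector whose Hamming weight ω_H(x) satisfies 0 < ω_H(x) ≤ n − (b−1) (weight measured relative to a fixed zero symbol 0 ∈ Ξ). Then ω_H(x) + b − 1 ≤ ω_b(x) ≤ b · ω_H(x), where ω_b(x) is the b-weight of x. -/
/-- The `b`-symbol read vector of `x ∈ Ξ^n`: its `i`-th entry is the `b`-tuple
`(x_i, x_{i+1}, …, x_{i+b-1})`, indices modulo `n`. -/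
def piB {Ξ : Type*} {n : ℕ} (b : ℕ) (x : Fin n → Ξ) : Fin n → (Fin b → Ξ) :=
  fun i j => x ⟨((i : ℕ) + (j : ℕ)) % n, Nat.mod_lt _ i.pos⟩

theorem aux_shift {n : ℕ} (P : Fin n → Prop) (hn : 0 < n)
    (h : ∀ i : Fin n, P ⟨((i : ℕ) + 1) % n, Nat.mod_lt _ hn⟩ → P i) (a : Fin n) (ha : P a)
    (i : Fin n) : P i := by
  have key : ∀ m : ℕ, ∀ i : Fin n, P ⟨((i : ℕ) + m) % n, Nat.mod_lt _ hn⟩ → P i := by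
    intro m
    induction m with
    | zero =>
      intro i hi
      have e : (⟨((i : ℕ) + 0) % n, Nat.mod_lt _ hn⟩ : Fin n) = i := by
        apply Fin.ext
        simp [Nat.mod_eq_of_lt i.isLt]
      rwa [e] at hi
    | succ m ih =>
      intro i hi
      apply h
      apply ih
      have e : (⟨((i : ℕ) + (m + 1)) % n, Nat.mod_lt _ hn⟩ : Fin n)
          = ⟨((((i : ℕ) + 1) % n) + m) % n, Nat.mod_lt _ hn⟩ := by
        apply Fin.ext
        simp only [Nat.mod_add_mod]
        congr 1
        ring
      rwa [e] at hi
  apply key ((a : ℕ) + n - i) i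
  have e : (⟨((i : ℕ) + ((a : ℕ) + n - i)) % n, Nat.mod_lt _ hn⟩ : Fin n) = a := by
    apply Fin.ext
    have h1 : (i : ℕ) + ((a : ℕ) + n - i) = a + n := by have := i.isLt; omega
    simp [h1, Nat.mod_eq_of_lt a.isLt]
  rwa [e]

open Classical in
theorem aux_lower {n : ℕ} (hn : 0 < n) (P : Fin n → Prop) (a : Fin n) (ha : P a) (k : ℕ) :
    min n ((Finset.univ.filter P).card + k) ≤
      (Finset.univ.filter fun i : Fin n =>
        ∃ j < k + 1, P ⟨((i : ℕ) + j) % n, Nat.mod_lt _ hn⟩).card := by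
  have self : ∀ i : Fin n, (⟨((i : ℕ) + 0) % n, Nat.mod_lt _ hn⟩ : Fin n) = i := by
    intro i
    apply Fin.ext
    simp [Nat.mod_eq_of_lt i.isLt]
  induction k with
  | zero =>
    refine (min_le_right _ _).trans ?_
    rw [Nat.add_zero]
    apply Finset.card_le_card
    intro i hi
    simp only [Finset.mem_filter, Finset.mem_univ, true_and] at hi ⊢
    exact ⟨0, by omega, by rw [self]; exact hi⟩
  | succ k ih =>
    set T := Finset.univ.filter fun i : Fin n =>
        ∃ j < k + 1, P ⟨((i : ℕ) + j) % n, Nat.mod_lt _ hn⟩ with hT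
    set U := Finset.univ.filter fun i : Fin n =>
        ∃ j < k + 1 + 1, P ⟨((i : ℕ) + j) % n, Nat.mod_lt _ hn⟩ with hU
    have hTU : T ⊆ U := by
      intro i hi
      simp only [hT, hU, Finset.mem_filter, Finset.mem_univ, true_and] at hi ⊢
      obtain ⟨j, hj, h⟩ := hi
      exact ⟨j, by omega, h⟩
    by_cases hEq : T = U
    · have all : ∀ i, i ∈ T := by
        apply aux_shift (fun i => i ∈ T) hn _ a
        · simp only [hT, Finset.mem_filter, Finset.mem_univ, true_and]
          exact ⟨0, by omega, by rw [self]; exact ha⟩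
        · intro i hi
          rw [hEq]
          simp only [hT, hU, Finset.mem_filter, Finset.mem_univ, true_and] at hi ⊢
          obtain ⟨j, hj, h⟩ := hi
          refine ⟨j + 1, by omega, ?_⟩
          convert h using 2
          simp only [Nat.mod_add_mod]
          congr 1
          ring
      have : U = Finset.univ := by
        rw [← hEq]; exact Finset.eq_univ_iff_forall.2 all
      rw [this]
      simp
    · have := Finset.card_lt_card (Finset.ssubset_iff_subset_ne.2 ⟨hTU, hEq⟩)
      omega

open Classical in
theorem aux_upper {n : ℕ} (hn : 0 < n) (P : Fin n → Prop) (b : ℕ) :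
    (Finset.univ.filter fun i : Fin n =>
        ∃ j < b, P ⟨((i : ℕ) + j) % n, Nat.mod_lt _ hn⟩).card
      ≤ b * (Finset.univ.filter P).card := by
  have hsub : (Finset.univ.filter fun i : Fin n =>
        ∃ j < b, P ⟨((i : ℕ) + j) % n, Nat.mod_lt _ hn⟩) ⊆
      (Finset.range b).biUnion fun j => Finset.univ.filter fun i : Fin n =>
        P ⟨((i : ℕ) + j) % n, Nat.mod_lt _ hn⟩ := by
    intro i hi
    simpa using hi
  refine (Finset.card_le_card hsub).trans ?_
  refine (Finset.card_biUnion_le_card_mul _ _ (Finset.univ.filter P).card ?_).trans (by simp)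
  intro j _
  apply Finset.card_le_card_of_injOn (fun i : Fin n => ⟨((i : ℕ) + j) % n, Nat.mod_lt _ hn⟩)
  · intro i hi
    simpa using hi
  · intro i _ k _ h
    have h1 : ((i : ℕ) + j) % n = ((k : ℕ) + j) % n := congrArg Fin.val h
    have h2 : (i : ℕ) ≡ k [MOD n] := Nat.ModEq.add_right_cancel' j h1
    exact Fin.ext (Nat.ModEq.eq_of_lt_of_lt h2 i.isLt k.isLt)

/-- If `Ξ` is a finite alphabet with at least two elements, `2 ≤ b ≤ n`, and
`x ∈ Ξ^n` has Hamming weight (relative to a fixed zero symbol `z`) satisfying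
`0 < ω_H(x) ≤ n - (b-1)`, then `ω_H(x) + b - 1 ≤ ω_b(x) ≤ b * ω_H(x)`. -/
theorem b_weight_bounds {Ξ : Type*} [Fintype Ξ] [DecidableEq Ξ]
    (hcard : 1 < Fintype.card Ξ) (z : Ξ) {n b : ℕ} (hb2 : 2 ≤ b) (hbn : b ≤ n)
    (x : Fin n → Ξ)
    (hw0 : 0 < (Finset.univ.filter fun i => x i ≠ z).card)
    (hwn : (Finset.univ.filter fun i => x i ≠ z).card ≤ n - (b - 1)) :
    (Finset.univ.filter fun i => x i ≠ z).card + b - 1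
        ≤ (Finset.univ.filter fun i => piB b x i ≠ fun _ => z).card ∧
      (Finset.univ.filter fun i => piB b x i ≠ fun _ => z).card
        ≤ b * (Finset.univ.filter fun i => x i ≠ z).card := by
  classical
  have hn : 0 < n := by omega
  have e : (Finset.univ.filter fun i => piB b x i ≠ fun _ => z) =
      (Finset.univ.filter fun i : Fin n =>
        ∃ j < b, x ⟨((i : ℕ) + j) % n, Nat.mod_lt _ hn⟩ ≠ z) := by
    ext i
    simp only [Finset.mem_filter, Finset.mem_univ, true_and, Function.ne_iff, piB]
    constructor
    · rintro ⟨j, hj⟩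
      exact ⟨j, j.isLt, hj⟩
    · rintro ⟨j, hj, h⟩
      exact ⟨⟨j, hj⟩, h⟩
  rw [e]
  obtain ⟨a, ha⟩ := Finset.card_pos.1 hw0
  have hxa : x a ≠ z := by simpa using ha
  have hl := aux_lower hn (fun i => x i ≠ z) a hxa (b - 1)
  have hu := aux_upper hn (fun i => x i ≠ z) b
  rw [show b - 1 + 1 = b by omega] at hl
  constructor
  · refine Nat.le_trans ?_ (Nat.le_trans hl (Nat.le_of_eq ?_))
    · have e2 : (Finset.univ.filter fun i => x i ≠ z).card + b - 1 ≤
          min n ((Finset.univ.filter fun i => x i ≠ z).card + (b - 1)) := by omega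
      convert e2
    · congr!
  · convert hu
end

section
/- Let Ξ be a finite alphabet, let n and b be integers with 2 ≤ b ≤ n, and let C ⊆ Ξ^n be a code with at least two codewords whose minimum Hamming distance d_H(C) satisfies 0 < d_H(C) ≤ n − (b−1). Then d_H(C) + b − 1 ≤ d_b(C) ≤ b · d_H(C), where d_b(C) is the minimum b-symbol distance of C. -/
/-- The minimum Hamming distance of a code `C ⊆ Ξ^n`. -/
noncomputable def dHset {Ξ : Type*} {n : ℕ} (C : Set (Fin n → Ξ)) : ℕ :=
  letI := Classical.decEq Ξ
  sInf {d | ∃ x ∈ C, ∃ y ∈ C, x ≠ y ∧ d = hammingDist x y}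

/-- The minimum `b`-symbol distance of a code `C ⊆ Ξ^n`. -/
noncomputable def dBset {Ξ : Type*} {n : ℕ} (b : ℕ) (C : Set (Fin n → Ξ)) : ℕ :=
  letI := Classical.decEq Ξ
  sInf {d | ∃ x ∈ C, ∃ y ∈ C, x ≠ y ∧ d = hammingDist (piB b x) (piB b y)}

open Classical in
/-- Positions `i` from which a window of length `k` meets the predicate `P`. -/
noncomputable def winT (n : ℕ) (P : ℕ → Prop) (k : ℕ) : Finset (Fin n) :=
  Finset.univ.filter (fun i : Fin n => ∃ j < k, P (i.val + j))

lemma winT_upper (n : ℕ) (P : ℕ → Prop) (hP : ∀ m, P (m % n) ↔ P m) (k : ℕ) :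
    (winT n P k).card ≤ k * (winT n P 1).card := by
  classical
  have hsub : winT n P k ⊆ (Finset.range k).biUnion
      (fun j => Finset.univ.filter (fun i : Fin n => P (i.val + j))) := by
    intro i hi
    simp only [winT, Finset.mem_filter, Finset.mem_univ, true_and] at hi
    obtain ⟨j, hj, h⟩ := hi
    simp only [Finset.mem_biUnion, Finset.mem_range, Finset.mem_filter, Finset.mem_univ, true_and]
    exact ⟨j, hj, h⟩
  refine (Finset.card_le_card hsub).trans ?_
  have := Finset.card_biUnion_le_card_mul (Finset.range k)
      (fun j => Finset.univ.filter (fun i : Fin n => P (i.val + j))) (winT n P 1).card ?_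
  · simpa using this
  intro j _
  refine Finset.card_le_card_of_injOn
    (fun i : Fin n => (⟨(i.val + j) % n, Nat.mod_lt _ i.pos⟩ : Fin n)) ?_ ?_
  · intro i hi
    simp only [Finset.coe_filter, Finset.mem_univ, true_and, Set.mem_setOf_eq] at hi
    simp only [winT, Finset.coe_filter, Finset.mem_univ, true_and, Set.mem_setOf_eq]
    exact ⟨0, by omega, by simpa using (hP _).2 hi⟩
  · intro a _ c _ h
    simp only [Fin.mk.injEq] at h
    have h2 : a.val ≡ c.val [MOD n] := Nat.ModEq.add_right_cancel' j h
    exact Fin.ext (Nat.ModEq.eq_of_lt_of_lt h2 a.isLt c.isLt)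

lemma winT_lower (n : ℕ) (P : ℕ → Prop) (hP : ∀ m, P (m % n) ↔ P m)
    (hne : (winT n P 1).Nonempty) (k : ℕ) :
    min n ((winT n P 1).card + k) ≤ (winT n P (k + 1)).card := by
  classical
  induction k with
  | zero => simp
  | succ k ih =>
    have hsub : winT n P (k + 1) ⊆ winT n P (k + 1 + 1) := by
      intro i hi
      simp only [winT, Finset.mem_filter, Finset.mem_univ, true_and] at hi ⊢
      obtain ⟨j, hj, h⟩ := hi
      exact ⟨j, by omega, h⟩
    by_cases hu : winT n P (k + 1) = Finset.univ
    · have := Finset.card_le_card hsub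
      rw [hu, Finset.card_univ, Fintype.card_fin] at this
      omega
    · have hlt : winT n P (k + 1) ⊂ winT n P (k + 1 + 1) := by
        refine Finset.ssubset_iff_subset_ne.2 ⟨hsub, fun heq => hu ?_⟩
        obtain ⟨s, hs⟩ := hne
        simp only [winT, Finset.mem_filter, Finset.mem_univ, true_and] at hs
        obtain ⟨j, hj, hs⟩ := hs
        obtain rfl : j = 0 := by omega
        rw [Finset.eq_univ_iff_forall]
        intro i
        have key : ∀ m, ∀ i : Fin n, P (i.val + m) → i ∈ winT n P (k + 1) := by
          intro m
          induction m with
          | zero =>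
            intro i h
            simp only [winT, Finset.mem_filter, Finset.mem_univ, true_and]
            exact ⟨0, by omega, h⟩
          | succ m ihm =>
            intro i h
            have h1 := ihm ⟨(i.val + 1) % n, Nat.mod_lt _ i.pos⟩ (by
              rw [← hP] at h ⊢
              have e : ((i.val + 1) % n + m) % n = (i.val + (m + 1)) % n := by
                rw [Nat.mod_add_mod]; congr 1; omega
              simpa only [e] using h)
            rw [heq]
            simp only [winT, Finset.mem_filter, Finset.mem_univ, true_and] at h1 ⊢
            obtain ⟨j, hj, h1⟩ := h1
            refine ⟨j + 1, by omega, ?_⟩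
            rw [← hP] at h1 ⊢
            have e : ((i.val + 1) % n + j) % n = (i.val + (j + 1)) % n := by
              rw [Nat.mod_add_mod]; congr 1; omega
            simpa only [e] using h1
        apply key (s.val + n - i.val)
        have hi := i.isLt
        have e : i.val + (s.val + n - i.val) = s.val + n := by omega
        rw [e, ← hP, Nat.add_mod_right, hP]
        simpa using hs
      have := Finset.card_lt_card hlt
      omega

lemma pair_bounds {Ξ : Type*} [DecidableEq Ξ] {n b : ℕ} (hb : 1 ≤ b) (x y : Fin n → Ξ)
    (hxy : x ≠ y) :
    min n (hammingDist x y + (b - 1)) ≤ hammingDist (piB b x) (piB b y) ∧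
      hammingDist (piB b x) (piB b y) ≤ b * hammingDist x y := by
  classical
  let P : ℕ → Prop := fun m => ∃ h : 0 < n, x ⟨m % n, Nat.mod_lt _ h⟩ ≠ y ⟨m % n, Nat.mod_lt _ h⟩
  have hP : ∀ m, P (m % n) ↔ P m := by
    intro m
    simp only [P, Nat.mod_mod]
  have h1 : hammingDist x y = (winT n P 1).card := by
    unfold hammingDist winT
    congr 1
    ext i
    have hi : i.val % n = i.val := Nat.mod_eq_of_lt i.isLt
    simp [P, hi, i.pos]
  have h2 : hammingDist (piB b x) (piB b y) = (winT n P b).card := by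
    unfold hammingDist winT
    congr 1
    ext i
    simp only [Finset.mem_filter, Finset.mem_univ, true_and, Function.ne_iff, piB, P]
    constructor
    · rintro ⟨j, hj⟩
      exact ⟨j, j.isLt, i.pos, hj⟩
    · rintro ⟨j, hj, _, h⟩
      exact ⟨⟨j, hj⟩, h⟩
  have hne : (winT n P 1).Nonempty := by
    rw [← Finset.card_pos, ← h1]
    exact hammingDist_pos.2 hxy
  rw [h1, h2]
  refine ⟨?_, winT_upper n P hP b⟩
  have := winT_lower n P hP hne (b - 1)
  rwa [Nat.sub_add_cancel hb] at this

/-- If `Ξ` is a finite alphabet, `2 ≤ b ≤ n`, and `C ⊆ Ξ^n` is a code with at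
least two codewords whose minimum Hamming distance satisfies
`0 < d_H(C) ≤ n - (b-1)`, then `d_H(C) + b - 1 ≤ d_b(C) ≤ b * d_H(C)`. -/
theorem b_distance_bounds {Ξ : Type*} [Fintype Ξ] {n b : ℕ}
    (hb2 : 2 ≤ b) (hbn : b ≤ n) (C : Set (Fin n → Ξ)) (hC : C.Nontrivial)
    (hd0 : 0 < dHset C) (hdn : dHset C ≤ n - (b - 1)) :
    dHset C + b - 1 ≤ dBset b C ∧ dBset b C ≤ b * dHset C := by
  classical
  obtain ⟨u, hu, v, hv, huv⟩ := hC
  letI := Classical.decEq Ξ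
  constructor
  · have hm : dBset b C ∈ {d | ∃ x ∈ C, ∃ y ∈ C, x ≠ y ∧ d = hammingDist (piB b x) (piB b y)} :=
      Nat.sInf_mem ⟨_, u, hu, v, hv, huv, rfl⟩
    obtain ⟨x, hx, y, hy, hxy, h⟩ := hm
    have h1 : dHset C ≤ hammingDist x y := Nat.sInf_le ⟨x, hx, y, hy, hxy, rfl⟩
    have h2 := (pair_bounds (b := b) (by omega) x y hxy).1
    rw [h]
    omega
  · have hm : dHset C ∈ {d | ∃ x ∈ C, ∃ y ∈ C, x ≠ y ∧ d = hammingDist x y} :=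
      Nat.sInf_mem ⟨_, u, hu, v, hv, huv, rfl⟩
    obtain ⟨x, hx, y, hy, hxy, h⟩ := hm
    have h1 : dBset b C ≤ hammingDist (piB b x) (piB b y) :=
      Nat.sInf_le ⟨x, hx, y, hy, hxy, rfl⟩
    have h2 := (pair_bounds (b := b) (by omega) x y hxy).2
    rw [h]
    exact h1.trans h2
end

section
/- Let p be a prime and m, e positive integers, and for 0 ≤ i ≤ p^e let C_i = ⟨(x−1)^i⟩ ⊆ 𝔽_{p^m}[x]/⟨x^{p^e}−1⟩ be the cyclic code of length p^e over 𝔽_{p^m}. Then the minimum Hamming distance of C_i is: d_H(C_i) = 1 if i = 0; d_H(C_i) = β + 2 if βp^{e−1} + 1 ≤ i ≤ (β+1)p^{e−1} for some 0 ≤ β ≤ p−2; d_H(C_i) = (t+1)p^k if p^e − p^{e−k} + (t−1)p^{e−k−1} + 1 ≤ i ≤ p^e − p^{e−k} + t p^{e−k−1} for some 1 ≤ t ≤ p−1 and 1 ≤ k ≤ e−1; and d_H(C_i) = 0 if i = p^e. -/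
open Polynomial

/-- The cyclic code `C_i = ⟨(x-1)^i⟩ ⊆ 𝔽_{p^m}[x]/⟨x^{p^e}-1⟩` of length `p^e`
over `𝔽_{p^m}`, viewed as the set of coefficient vectors `c ∈ 𝔽_{p^m}^{p^e}`
whose associated polynomial is congruent to a multiple of `(x-1)^i` modulo
`x^{p^e} - 1`. -/
noncomputable def Ccode (p m e : ℕ) [Fact p.Prime] (i : ℕ) :
    Set (Fin (p ^ e) → GaloisField p m) :=
  {c | ∃ f : Polynomial (GaloisField p m),
    (X ^ (p ^ e) - 1 : Polynomial (GaloisField p m)) ∣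
      ((∑ j : Fin (p ^ e), Polynomial.C (c j) * X ^ (j : ℕ)) - (X - 1) ^ i * f)}

/-- The minimum Hamming distance of a code `C ⊆ F^n` (0 if `C` has at most one
codeword). -/
noncomputable def dHcode {F : Type*} {n : ℕ} (Cc : Set (Fin n → F)) : ℕ :=
  letI := Classical.decEq F
  sInf {d | ∃ x ∈ Cc, ∃ y ∈ Cc, x ≠ y ∧ d = hammingDist x y}

section HelperLemmas

variable {F : Type*} [Field F]

lemma hd_card_support_mul_X (g : F[X]) : (X * g).support.card = g.support.card := by
  have h : (X * g).support = g.support.map ⟨Nat.succ, Nat.succ_injective⟩ := by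
    ext n
    cases n with
    | zero => simp
    | succ n => simp [coeff_X_mul]
  rw [h, Finset.card_map]

lemma hd_card_support_expand (p : ℕ) (hp : 0 < p) (g : F[X]) :
    (expand F p g).support.card = g.support.card := by
  have h : (expand F p g).support = g.support.image (fun n => n * p) := by
    ext n
    simp only [mem_support_iff, Finset.mem_image, coeff_expand hp]
    constructor
    · intro h
      by_cases hd : p ∣ n
      · rw [if_pos hd] at h
        exact ⟨n / p, h, Nat.div_mul_cancel hd⟩
      · simp [hd] at h
    · rintro ⟨a, ha, rfl⟩
      simpa [hp] using ha
  rw [h, Finset.card_image_of_injective]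
  intro a b hab
  exact Nat.eq_of_mul_eq_mul_right hp hab

lemma hd_card_support_derivative (g : F[X]) (h0 : g.coeff 0 ≠ 0) :
    (derivative g).support.card + 1 ≤ g.support.card := by
  have h : ((derivative g).support.map ⟨Nat.succ, Nat.succ_injective⟩) ⊆ g.support.erase 0 := by
    intro n hn
    simp only [Finset.mem_map, Function.Embedding.coeFn_mk, mem_support_iff] at hn
    obtain ⟨a, ha, rfl⟩ := hn
    rw [coeff_derivative] at ha
    simp only [Finset.mem_erase, mem_support_iff]
    exact ⟨Nat.succ_ne_zero a, left_ne_zero_of_mul ha⟩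
  have h1 := Finset.card_le_card h
  have h2 : (g.support.erase 0).card + 1 = g.support.card :=
    Finset.card_erase_add_one (by simpa using h0)
  rw [Finset.card_map] at h1
  omega

/-- A nonzero polynomial of degree `< p^(e+1)` whose support has `w` elements has
multiplicity at most `(w-1) p^e` at `1`. -/
lemma hd_mult_le (p : ℕ) [Fact p.Prime] [CharP F p] (n : ℕ) :
    ∀ (e : ℕ) (g : F[X]), g.natDegree = n → g ≠ 0 → g.natDegree < p ^ (e + 1) →
      g.rootMultiplicity 1 ≤ (g.support.card - 1) * p ^ e := by
  have hp : p.Prime := Fact.out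
  induction n using Nat.strong_induction_on with
  | _ n ih =>
  intro e g hgn hg hdeg
  by_cases h0 : g.coeff 0 = 0
  · obtain ⟨h, rfl⟩ := X_dvd_iff.2 h0
    have hh : h ≠ 0 := right_ne_zero_of_mul hg
    have hd : (X * h).natDegree = h.natDegree + 1 := natDegree_X_mul hh
    have := ih h.natDegree (by omega) e h rfl hh (by omega)
    rw [hd_card_support_mul_X, rootMultiplicity_mul hg]
    have hX : rootMultiplicity 1 (X : F[X]) = 0 := by
      apply rootMultiplicity_eq_zero
      simp
    omega
  · by_cases hder : derivative g = 0
    · have hexp := expand_contract p hder hp.ne_zero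
      set h := contract p g with hh
      have hh0 : h ≠ 0 := by
        rintro h1
        rw [h1] at hexp
        exact hg (by rw [← hexp]; simp)
      have hd : g.natDegree = h.natDegree * p := by
        rw [← hexp, natDegree_expand]
      have hp1 := hp.one_lt
      by_cases hc : h.natDegree = 0
      · have hg0 : g.natDegree = 0 := by rw [hd, hc, zero_mul]
        rw [eq_C_of_natDegree_eq_zero hg0]
        simp
      · have hlt : h.natDegree < p ^ e := by
          rw [hd, pow_succ] at hdeg
          exact lt_of_mul_lt_mul_right hdeg (Nat.zero_le _)
        cases e with
        | zero => simp at hlt; omega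
        | succ e =>
          have h2 : h.natDegree < n := by
            rw [← hgn, hd]
            nlinarith [Nat.pos_of_ne_zero hc]
          have := ih h.natDegree h2 e h rfl hh0 hlt
          rw [← hexp, hd_card_support_expand p hp.pos, rootMultiplicity_expand, one_pow, pow_succ]
          nlinarith
    · have hw := hd_card_support_derivative g h0
      have hnd : g.natDegree ≠ 0 := by
        intro h1
        apply hder
        rw [eq_C_of_natDegree_eq_zero h1, derivative_C]
      have hlt : (derivative g).natDegree < g.natDegree := natDegree_derivative_lt hnd
      have := ih _ (by omega) e (derivative g) rfl hder (by omega)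
      have h3 : g.rootMultiplicity 1 - 1 ≤ (derivative g).rootMultiplicity 1 := by
        rw [le_rootMultiplicity_iff hder]
        exact pow_sub_one_dvd_derivative_of_pow_dvd (pow_rootMultiplicity_dvd g 1)
      have h4 : 0 < (derivative g).support.card := by
        rw [Finset.card_pos]
        exact support_nonempty.2 hder
      obtain ⟨a, ha⟩ : ∃ a, (derivative g).support.card = a + 1 := ⟨_, (Nat.succ_pred_eq_of_pos h4).symm⟩
      have h5 : a + 1 ≤ g.support.card - 1 := by omega
      have h6 : 0 < p ^ e := pow_pos hp.pos _
      rw [ha] at this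
      calc g.rootMultiplicity 1 ≤ a * p ^ e + p ^ e := by
            simp at this; omega
        _ = (a + 1) * p ^ e := by ring
        _ ≤ _ := Nat.mul_le_mul_right _ h5

lemma hd_geom (p : ℕ) [Fact p.Prime] [CharP F p] (q k : ℕ) (hq : 0 < q) :
    ((X : F[X]) ^ q - 1) ^ (p ^ k - 1) = ∑ j ∈ Finset.range (p ^ k), X ^ (q * j) := by
  have hne : ((X : F[X]) ^ q - 1) ≠ 0 := by
    have := X_pow_sub_C_ne_zero hq (1 : F)
    simpa using this
  have hp : 0 < p ^ k := pow_pos (Fact.out : p.Prime).pos _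
  apply mul_right_cancel₀ hne
  rw [← pow_succ, Nat.sub_add_cancel hp, sub_pow_char_pow, one_pow]
  simp_rw [pow_mul]
  rw [geom_sum_mul]

lemma hd_card_geom_mul (q N : ℕ) (g : F[X]) (hg : g.natDegree < q) :
    g.support.card * N ≤ ((∑ j ∈ Finset.range N, (X : F[X]) ^ (q * j)) * g).support.card := by
  have hinj : Set.InjOn (fun x : ℕ × ℕ => q * x.2 + x.1)
      (g.support ×ˢ Finset.range N : Finset (ℕ × ℕ)) := by
    rintro ⟨a, b⟩ hab ⟨c, d⟩ hcd h
    simp only [Finset.coe_product, Set.mem_prod, Finset.mem_coe] at hab hcd h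
    have ha : a < q := (le_natDegree_of_mem_supp a hab.1).trans_lt hg
    have hc : c < q := (le_natDegree_of_mem_supp c hcd.1).trans_lt hg
    have h1 := congrArg (· % q) h
    have h2 := congrArg (· / q) h
    have hq : 0 < q := by omega
    simp [Nat.mul_add_mod, Nat.mod_eq_of_lt, ha, hc] at h1
    simp [Nat.mul_add_div hq, Nat.div_eq_of_lt, ha, hc] at h2
    simp [h1, h2]
  have h := Finset.card_image_of_injOn hinj
  rw [Finset.card_product, Finset.card_range] at h
  rw [← h]
  apply Finset.card_le_card
  intro n hn
  simp only [Finset.mem_image, Finset.mem_product, Finset.mem_range, Prod.exists] at hn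
  obtain ⟨a, b, ⟨ha, hb⟩, rfl⟩ := hn
  have haq : a < q := (le_natDegree_of_mem_supp a ha).trans_lt hg
  rw [mem_support_iff, Finset.sum_mul, finsetSum_coeff, Finset.sum_eq_single b]
  · rw [add_comm, coeff_X_pow_mul]
    simpa using ha
  · intro j _ hj
    rw [coeff_X_pow_mul']
    split_ifs with hle
    · apply coeff_eq_zero_of_natDegree_lt
      rcases lt_or_gt_of_ne hj with h1 | h1
      · obtain ⟨c, rfl⟩ := Nat.exists_eq_add_of_lt h1
        have : q * (j + c + 1) = q * j + q * c + q := by ring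
        omega
      · exfalso
        obtain ⟨c, rfl⟩ := Nat.exists_eq_add_of_lt h1
        have : q * (b + c + 1) = q * b + q * c + q := by ring
        omega
    · rfl
  · intro h1
    simp [hb] at h1

lemma hd_X_sub_one_pow (p : ℕ) [Fact p.Prime] [CharP F p] (n : ℕ) :
    ((X : F[X]) - 1) ^ (p ^ n) = X ^ (p ^ n) - 1 := by
  rw [sub_pow_char_pow, one_pow]

/-- lower bound -/
lemma hd_lower (p : ℕ) [Fact p.Prime] [CharP F p] (k s t i : ℕ)
    (hi : (p ^ k - 1) * p ^ (s + 1) + t * p ^ s + 1 ≤ i)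
    (g : F[X]) (hg : g ≠ 0) (hdeg : g.natDegree < p ^ (k + s + 1)) (hdvd : (X - 1) ^ i ∣ g) :
    (t + 2) * p ^ k ≤ g.support.card := by
  have hpp : p.Prime := Fact.out
  have hk : 0 < p ^ k := pow_pos hpp.pos _
  have hs : 0 < p ^ s := pow_pos hpp.pos _
  have hs1 : 0 < p ^ (s + 1) := pow_pos hpp.pos _
  obtain ⟨f, hf⟩ := (pow_dvd_pow ((X : F[X]) - 1) hi).trans hdvd
  rw [add_assoc, pow_add, mul_comm (p ^ k - 1), pow_mul, hd_X_sub_one_pow, hd_geom p _ _ hs1,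
    mul_assoc] at hf
  set g' := (X - 1) ^ (t * p ^ s + 1) * f with hg'
  have hg0 : g' ≠ 0 := by
    rintro h; rw [h, mul_zero] at hf; exact hg hf
  have hXq : ((X : F[X]) ^ (p ^ (s + 1)) - 1).natDegree = p ^ (s + 1) := by
    have := natDegree_X_pow_sub_C (n := p ^ (s + 1)) (r := (1 : F))
    simpa using this
  have hdeg' : g'.natDegree < p ^ (s + 1) := by
    have hf2 := hf
    rw [← hd_geom p _ _ hs1] at hf2
    have hne : ((X : F[X]) ^ (p ^ (s + 1)) - 1) ^ (p ^ k - 1) ≠ 0 := by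
      rintro h; rw [h, zero_mul] at hf2; exact hg hf2
    rw [hf2, natDegree_mul hne hg0, natDegree_pow, hXq] at hdeg
    have h1 : p ^ (k + s + 1) = (p ^ k - 1) * p ^ (s + 1) + p ^ (s + 1) := by
      obtain ⟨a, ha⟩ : ∃ a, p ^ k = a + 1 := ⟨_, (Nat.succ_pred_eq_of_pos hk).symm⟩
      rw [add_assoc, pow_add, ha]; simp; ring
    omega
  have h1 := hd_mult_le p _ s g' rfl hg0 hdeg'
  have h2 : t * p ^ s + 1 ≤ g'.rootMultiplicity 1 := by
    rw [le_rootMultiplicity_iff hg0]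
    exact ⟨f, by rw [hg']; simp⟩
  have h3 : t < g'.support.card - 1 := by
    have : t * p ^ s < (g'.support.card - 1) * p ^ s := by omega
    exact lt_of_mul_lt_mul_right this (Nat.zero_le _)
  have h4 := hd_card_geom_mul (p ^ (s + 1)) (p ^ k) g' hdeg'
  rw [hf]
  exact (Nat.mul_le_mul_right _ (by omega)).trans h4

/-- upper bound -/
lemma hd_upper (p : ℕ) [Fact p.Prime] [CharP F p] (k s t i : ℕ) (ht : t + 1 < p)
    (hi : i ≤ (p ^ k - 1) * p ^ (s + 1) + (t + 1) * p ^ s) :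
    ∃ g : F[X], g ≠ 0 ∧ g.natDegree < p ^ (k + s + 1) ∧ (X - 1) ^ i ∣ g ∧
      g.support.card ≤ (t + 2) * p ^ k := by
  have hpp : p.Prime := Fact.out
  have hk : 0 < p ^ k := pow_pos hpp.pos _
  have hs : 0 < p ^ s := pow_pos hpp.pos _
  have hs1 : 0 < p ^ (s + 1) := pow_pos hpp.pos _
  have hX1 : ((X : F[X]) - 1).natDegree = 1 := by simpa using natDegree_X_sub_C (1 : F)
  refine ⟨(X - 1) ^ ((p ^ k - 1) * p ^ (s + 1) + (t + 1) * p ^ s), ?_, ?_, pow_dvd_pow _ hi, ?_⟩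
  · apply pow_ne_zero
    simpa using X_sub_C_ne_zero (1 : F)
  · rw [natDegree_pow, hX1, mul_one]
    have h1 : p ^ (k + s + 1) = (p ^ k - 1) * p ^ (s + 1) + p * p ^ s := by
      obtain ⟨a, ha⟩ : ∃ a, p ^ k = a + 1 := ⟨_, (Nat.succ_pred_eq_of_pos hk).symm⟩
      rw [add_assoc, pow_add, ha]; simp; ring
    have h2 : (t + 1) * p ^ s < p * p ^ s := Nat.mul_lt_mul_of_pos_right ht hs
    omega
  · rw [pow_add, mul_comm (p ^ k - 1), pow_mul, hd_X_sub_one_pow, hd_geom p _ _ hs1,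
      mul_comm (t + 1), pow_mul, hd_X_sub_one_pow, mul_comm (t + 2)]
    refine (card_support_mul_le).trans (Nat.mul_le_mul ?_ ?_)
    · refine (Finset.card_le_card (t := (Finset.range (p ^ k)).image
        (fun j => p ^ (s + 1) * j)) ?_).trans (Finset.card_image_le.trans (by simp))
      intro n hn
      rw [mem_support_iff, finsetSum_coeff] at hn
      obtain ⟨j, hj, hj2⟩ := Finset.exists_ne_zero_of_sum_ne_zero hn
      rw [coeff_X_pow] at hj2
      simp only [ne_eq, ite_eq_right_iff, Classical.not_imp] at hj2
      exact Finset.mem_image.2 ⟨j, hj, hj2.1.symm⟩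
    · have h : ((X : F[X]) ^ (p ^ s) - 1) ^ (t + 1) = expand F (p ^ s) ((X - 1) ^ (t + 1)) := by
        simp
      rw [h, hd_card_support_expand _ hs]
      refine (card_supp_le_succ_natDegree _).trans ?_
      rw [natDegree_pow, hX1]; omega

/-- the polynomial of a vector -/
noncomputable def hdPoly {n : ℕ} (c : Fin n → F) : F[X] :=
  ∑ j : Fin n, Polynomial.C (c j) * X ^ (j : ℕ)

lemma hdPoly_coeff {n : ℕ} (c : Fin n → F) (a : ℕ) :
    (hdPoly c).coeff a = if h : a < n then c ⟨a, h⟩ else 0 := by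
  rw [hdPoly, finsetSum_coeff]
  simp only [coeff_C_mul_X_pow]
  split_ifs with h
  · rw [Finset.sum_eq_single ⟨a, h⟩]
    · simp
    · intro b _ hb
      rw [if_neg]
      rintro rfl
      exact hb rfl
    · simp
  · apply Finset.sum_eq_zero
    intro b _
    rw [if_neg]
    rintro rfl
    exact h b.2

lemma hdPoly_sub {n : ℕ} (c d : Fin n → F) : hdPoly (c - d) = hdPoly c - hdPoly d := by
  simp [hdPoly, sub_mul, Finset.sum_sub_distrib]

lemma hdPoly_zero {n : ℕ} : hdPoly (0 : Fin n → F) = 0 := by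
  simp [hdPoly]

lemma hdPoly_surj {n : ℕ} (g : F[X]) (hg : g.natDegree < n) :
    hdPoly (fun j : Fin n => g.coeff j) = g := by
  ext a
  rw [hdPoly_coeff]
  split_ifs with h
  · rfl
  · exact (coeff_eq_zero_of_natDegree_lt (by omega)).symm

lemma hdPoly_ne {n : ℕ} (c : Fin n → F) (hc : c ≠ 0) : hdPoly c ≠ 0 := by
  intro h
  apply hc
  ext j
  have := hdPoly_coeff c j
  rw [h] at this
  simpa using this.symm

lemma hdPoly_natDegree {n : ℕ} (hn : 0 < n) (c : Fin n → F) : (hdPoly c).natDegree < n := by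
  have : (hdPoly c).natDegree ≤ n - 1 := by
    rw [natDegree_le_iff_coeff_eq_zero]
    intro a ha
    rw [hdPoly_coeff, dif_neg (by omega)]
  omega

lemma hdPoly_dist [DecidableEq F] {n : ℕ} (c d : Fin n → F) :
    hammingDist c d = (hdPoly (c - d)).support.card := by
  unfold hammingDist
  rw [← Finset.card_map Fin.valEmbedding]
  congr 1
  ext a
  simp only [Finset.mem_map, Finset.mem_filter, Finset.mem_univ, true_and, mem_support_iff,
    hdPoly_coeff, Fin.valEmbedding_apply]
  constructor
  · rintro ⟨j, hj, rfl⟩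
    simpa [sub_eq_zero] using hj
  · intro h
    split_ifs at h with h1
    · exact ⟨⟨a, h1⟩, by simpa [sub_eq_zero] using h, rfl⟩
    · exact absurd rfl h

end HelperLemmas

lemma hd_mem (p m e : ℕ) [Fact p.Prime] (i : ℕ) (hi : i ≤ p ^ e)
    (c : Fin (p ^ e) → GaloisField p m) : c ∈ Ccode p m e i ↔ (X - 1) ^ i ∣ hdPoly c := by
  constructor
  · rintro ⟨f, hf⟩
    have h1 : ((X : (GaloisField p m)[X]) - 1) ^ i ∣ X ^ (p ^ e) - 1 := by
      rw [← hd_X_sub_one_pow]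
      exact pow_dvd_pow _ hi
    have h2 := h1.trans hf
    exact (dvd_sub_left (Dvd.intro f rfl)).1 h2
  · rintro ⟨f, hf⟩
    refine ⟨f, ?_⟩
    change _ ∣ hdPoly c - _
    rw [hf, sub_self]
    exact dvd_zero _

lemma hd_main (p m e : ℕ) [Fact p.Prime] (i d : ℕ) (hi : i ≤ p ^ e)
    (hlow : ∀ g : (GaloisField p m)[X], g ≠ 0 → g.natDegree < p ^ e → (X - 1) ^ i ∣ g →
      d ≤ g.support.card)
    (hup : ∃ g : (GaloisField p m)[X], g ≠ 0 ∧ g.natDegree < p ^ e ∧ (X - 1) ^ i ∣ g ∧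
      g.support.card ≤ d) : dHcode (Ccode p m e i) = d := by
  classical
  have hpp : p.Prime := Fact.out
  unfold dHcode
  apply le_antisymm
  · obtain ⟨g, hg, hdeg, hdvd, hc⟩ := hup
    refine (Nat.sInf_le (m := g.support.card) ?_).trans hc
    refine ⟨fun j => g.coeff j, ?_, 0, ?_, ?_, ?_⟩
    · rw [hd_mem p m e i hi, hdPoly_surj g hdeg]; exact hdvd
    · rw [hd_mem p m e i hi, hdPoly_zero]; exact dvd_zero _
    · intro h
      apply hg
      rw [← hdPoly_surj g hdeg, h, hdPoly_zero]
    · rw [hdPoly_dist, sub_zero, hdPoly_surj g hdeg]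
  · apply le_csInf
    · obtain ⟨g, hg, hdeg, hdvd, hc⟩ := hup
      refine ⟨_, fun j => g.coeff j, ?_, 0, ?_, ?_, rfl⟩
      · rw [hd_mem p m e i hi, hdPoly_surj g hdeg]; exact hdvd
      · rw [hd_mem p m e i hi, hdPoly_zero]; exact dvd_zero _
      · intro h
        apply hg
        rw [← hdPoly_surj g hdeg, h, hdPoly_zero]
    · rintro b ⟨x, hx, y, hy, hxy, rfl⟩
      rw [hd_mem p m e i hi] at hx hy
      rw [hdPoly_dist]
      apply hlow _ (hdPoly_ne _ (sub_ne_zero.2 hxy)) (hdPoly_natDegree (pow_pos hpp.pos _) _)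
      rw [hdPoly_sub]
      exact dvd_sub hx hy

lemma hd_case (p m k s t : ℕ) [Fact p.Prime] (i : ℕ) (ht : t + 1 < p)
    (h1 : (p ^ k - 1) * p ^ (s + 1) + t * p ^ s + 1 ≤ i)
    (h2 : i ≤ (p ^ k - 1) * p ^ (s + 1) + (t + 1) * p ^ s) (hi : i ≤ p ^ (k + s + 1)) :
    dHcode (Ccode p m (k + s + 1) i) = (t + 2) * p ^ k :=
  hd_main p m _ i _ hi (fun g hg hd hdvd => hd_lower p k s t i h1 g hg hd hdvd)
    (hd_upper p k s t i ht h2)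

/-- The Hamming distance distribution of the cyclic codes
`C_i = ⟨(x-1)^i⟩ ⊆ 𝔽_{p^m}[x]/⟨x^{p^e}-1⟩` for `0 ≤ i ≤ p^e`:
`d_H(C_0) = 1`; `d_H(C_i) = β+2` if `βp^{e-1}+1 ≤ i ≤ (β+1)p^{e-1}` with
`0 ≤ β ≤ p-2`; `d_H(C_i) = (t+1)p^k` if
`p^e - p^{e-k} + (t-1)p^{e-k-1} + 1 ≤ i ≤ p^e - p^{e-k} + tp^{e-k-1}` with
`1 ≤ t ≤ p-1`, `1 ≤ k ≤ e-1`; and `d_H(C_{p^e}) = 0`. -/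
theorem hamming_distance_repeated_root (p m e : ℕ) [Fact p.Prime]
    (hm : 0 < m) (he : 0 < e) (i : ℕ) (hi : i ≤ p ^ e) :
    (i = 0 → dHcode (Ccode p m e i) = 1) ∧
    (∀ β : ℕ, β ≤ p - 2 → β * p ^ (e - 1) + 1 ≤ i → i ≤ (β + 1) * p ^ (e - 1) →
      dHcode (Ccode p m e i) = β + 2) ∧
    (∀ t k : ℕ, 1 ≤ t → t ≤ p - 1 → 1 ≤ k → k ≤ e - 1 →
      p ^ e - p ^ (e - k) + (t - 1) * p ^ (e - k - 1) + 1 ≤ i →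
      i ≤ p ^ e - p ^ (e - k) + t * p ^ (e - k - 1) →
      dHcode (Ccode p m e i) = (t + 1) * p ^ k) ∧
    (i = p ^ e → dHcode (Ccode p m e i) = 0) := by
  have hpp : p.Prime := Fact.out
  have hp2 := hpp.two_le
  refine ⟨?_, ?_, ?_, ?_⟩
  · rintro rfl
    apply hd_main p m e 0 1 hi
    · intro g hg _ _
      exact Finset.card_pos.2 (support_nonempty.2 hg)
    · refine ⟨1, one_ne_zero, ?_, by simp, ?_⟩
      · rw [natDegree_one]; exact pow_pos hpp.pos _
      · refine (card_supp_le_succ_natDegree _).trans ?_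
        simp
  · intro β hβ h1 h2
    obtain ⟨s, rfl⟩ : ∃ s, e = 0 + s + 1 := ⟨e - 1, by omega⟩
    have := hd_case p m 0 s β i (by omega) (by simpa using h1) (by simpa using h2)
      hi
    rw [this, pow_zero, mul_one]
  · intro t k ht1 ht2 hk1 hk2 h1 h2
    obtain ⟨s, rfl⟩ : ∃ s, e = k + s + 1 := ⟨e - k - 1, by omega⟩
    obtain ⟨t, rfl⟩ : ∃ u, t = u + 1 := ⟨t - 1, by omega⟩
    have e1 : k + s + 1 - k = s + 1 := by omega
    have e2 : p ^ (k + s + 1) - p ^ (s + 1) = (p ^ k - 1) * p ^ (s + 1) := by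
      rw [add_assoc, pow_add, Nat.sub_mul, one_mul]
    rw [e1, e2, Nat.add_sub_cancel, Nat.add_sub_cancel] at h1
    rw [e1, e2, Nat.add_sub_cancel] at h2
    exact hd_case p m k s t i (by omega) h1 h2 hi
  · rintro rfl
    unfold dHcode
    have hempty : ∀ x ∈ Ccode p m e (p ^ e), x = 0 := by
      intro x hx
      rw [hd_mem p m e _ le_rfl] at hx
      by_contra hne
      have h1 := natDegree_le_of_dvd hx (hdPoly_ne x hne)
      have hX1 : ((X : (GaloisField p m)[X]) - 1).natDegree = 1 := by
        simpa using natDegree_X_sub_C (1 : GaloisField p m)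
      rw [natDegree_pow, hX1, mul_one] at h1
      have := hdPoly_natDegree (pow_pos hpp.pos _) x
      omega
    rw [Nat.sInf_eq_zero]
    right
    rw [Set.eq_empty_iff_forall_notMem]
    rintro d ⟨x, hx, y, hy, hxy, _⟩
    exact hxy ((hempty x hx).trans (hempty y hy).symm)
end

section
/- Let p be a prime, m, e positive integers, and b an integer with 2 ≤ b < p^e. Then for every i with 1 ≤ i ≤ p^{e−1}, the cyclic code C_i = ⟨(x−1)^i⟩ ⊆ 𝔽_{p^m}[x]/⟨x^{p^e}−1⟩ satisfies b + 1 ≤ d_b(C_i) ≤ 2b. -/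
open Polynomial

/-- The minimum `b`-symbol distance of a code `C ⊆ F^n`. -/
noncomputable def dBcode {F : Type*} {n : ℕ} (b : ℕ) (Cc : Set (Fin n → F)) : ℕ :=
  letI := Classical.decEq F
  sInf {d | ∃ x ∈ Cc, ∃ y ∈ Cc, x ≠ y ∧ d = hammingDist (piB b x) (piB b y)}

lemma aux_mod {n u d : ℕ} (hu : u < n) (hd : d < n) :
    (u + n - d) % n = if d ≤ u then u - d else u + n - d := by
  split_ifs with h
  · rw [show u + n - d = (u - d) + n by omega, Nat.add_mod_right, Nat.mod_eq_of_lt (by omega)]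
  · exact Nat.mod_eq_of_lt (by omega)

lemma aux_lower_s7 {F : Type*} [DecidableEq F] {n b : ℕ} (hb0 : 2 ≤ b) (hb : b < n)
    (x y : Fin n → F) (u v : Fin n) (huv : u ≠ v) (hu : x u ≠ y u) (hv : x v ≠ y v) :
    b + 1 ≤ hammingDist (piB b x) (piB b y) := by
  have hn : 0 < n := by omega
  set g : ℕ → Fin n := fun j => ⟨((u : ℕ) + n - j) % n, Nat.mod_lt _ hn⟩ with hg
  have huv' : (u : ℕ) ≠ v := fun h => huv (Fin.ext h)
  obtain ⟨d, hd0, hdn, hdv⟩ : ∃ d, 0 < d ∧ d < n ∧ ((u : ℕ) + n - d) % n = v := by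
    have h1 := u.2
    have h2 := v.2
    by_cases h : (v : ℕ) ≤ u
    · refine ⟨u - v, by omega, by omega, ?_⟩
      rw [aux_mod u.2 (by omega)]
      split_ifs <;> omega
    · refine ⟨u + n - v, by omega, by omega, ?_⟩
      rw [aux_mod u.2 (by omega)]
      split_ifs <;> omega
  have hinj : Set.InjOn g (insert (max d b) (Finset.range b) : Finset ℕ) := by
    intro a ha c hc hac
    have ha' : a < n := by
      simp at ha; omega
    have hc' : c < n := by
      simp at hc; omega
    have h3 : ((u : ℕ) + n - a) % n = ((u : ℕ) + n - c) % n := congrArg Fin.val hac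
    rw [aux_mod u.2 ha', aux_mod u.2 hc'] at h3
    have h1 := u.2
    split_ifs at h3 <;> omega
  have hcard : (insert (max d b) (Finset.range b) : Finset ℕ).card = b + 1 := by
    rw [Finset.card_insert_of_notMem (by simp), Finset.card_range]
  rw [← hcard]
  unfold hammingDist
  refine Finset.card_le_card_of_injOn g ?_ hinj
  -- windows at offset `k` before a differing position
  have key : ∀ (j k : ℕ) (w : Fin n), k < b → (((u : ℕ) + n - j) + k) % n = w → x w ≠ y w →
      piB b x (g j) ≠ piB b y (g j) := by
    intro j k w hk hw hne heq
    apply hne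
    have := congrFun heq ⟨k, hk⟩
    simp only [piB, hg, Nat.mod_add_mod] at this
    have hw' : (⟨(((u : ℕ) + n - j) + k) % n, Nat.mod_lt _ hn⟩ : Fin n) = w := Fin.ext hw
    rwa [hw'] at this
  intro j hj
  simp only [Finset.coe_filter, Finset.mem_univ, true_and, Set.mem_ofPred_eq]
  rcases Finset.mem_insert.1 (Finset.mem_coe.1 hj) with h | h
  · refine key j (j - d) v (by omega) ?_ hv
    rw [← hdv]
    congr 1
    omega
  · have hjb := Finset.mem_range.1 h
    refine key j j u hjb ?_ hu
    rw [show (u : ℕ) + n - j + j = u + n by omega, Nat.add_mod_right, Nat.mod_eq_of_lt u.2]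

lemma aux_upper_s7 {F : Type*} [DecidableEq F] {n b : ℕ} (hb : b < n)
    (x y : Fin n → F) (u v : Fin n) (h : ∀ w, w ≠ u → w ≠ v → x w = y w) :
    hammingDist (piB b x) (piB b y) ≤ 2 * b := by
  have hn : 0 < n := by omega
  let g : Fin n → ℕ → Fin n := fun u j => ⟨((u : ℕ) + n - j) % n, Nat.mod_lt _ hn⟩
  have hsub : (Finset.univ.filter fun k => piB b x k ≠ piB b y k) ⊆
      (Finset.range b).image (g u) ∪ (Finset.range b).image (g v) := by
    intro k hk
    simp only [Finset.mem_filter, Finset.mem_univ, true_and] at hk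
    obtain ⟨j, hj⟩ := Function.ne_iff.1 hk
    have hback : ∀ w : Fin n, ((k : ℕ) + j) % n = w → g w j = k := by
      intro w hw
      apply Fin.ext
      have hk := k.2
      have hj := j.2
      have hw2 := w.2
      change ((w : ℕ) + n - j) % n = k
      rw [aux_mod w.2 (by omega)]
      by_cases hlt : (k : ℕ) + j < n
      · rw [Nat.mod_eq_of_lt hlt] at hw
        split_ifs <;> omega
      · rw [Nat.mod_eq_sub_mod (by omega), Nat.mod_eq_of_lt (by omega)] at hw
        split_ifs <;> omega
    have hj2 : x ⟨((k : ℕ) + (j : ℕ)) % n, Nat.mod_lt _ k.pos⟩ ≠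
      y ⟨((k : ℕ) + (j : ℕ)) % n, Nat.mod_lt _ k.pos⟩ := hj
    simp only [Finset.mem_union, Finset.mem_image, Finset.mem_range]
    by_cases h1 : (⟨((k : ℕ) + (j : ℕ)) % n, Nat.mod_lt _ k.pos⟩ : Fin n) = u
    · exact Or.inl ⟨j, j.2, hback u (congrArg Fin.val h1)⟩
    by_cases h2 : (⟨((k : ℕ) + (j : ℕ)) % n, Nat.mod_lt _ k.pos⟩ : Fin n) = v
    · exact Or.inr ⟨j, j.2, hback v (congrArg Fin.val h2)⟩
    exact absurd (h _ h1 h2) hj2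
  unfold hammingDist
  refine (Finset.card_le_card hsub).trans ((Finset.card_union_le _ _).trans ?_)
  have h1 := Finset.card_image_le (s := Finset.range b) (f := g u)
  have h2 := Finset.card_image_le (s := Finset.range b) (f := g v)
  rw [Finset.card_range] at h1 h2
  omega

lemma aux_sum (p m e : ℕ) [Fact p.Prime] (i : ℕ) (hi : 1 ≤ i)
    (c : Fin (p ^ e) → GaloisField p m) (hc : c ∈ Ccode p m e i) : ∑ j, c j = 0 := by
  obtain ⟨f, g, hf⟩ := hc
  have := congrArg (Polynomial.eval 1) hf
  have hi0 : i ≠ 0 := by omega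
  simpa [Polynomial.eval_finsetSum, zero_pow hi0] using this

lemma aux_two {F : Type*} [Field F] {n : ℕ} (x y : Fin n → F) (hx : ∑ j, x j = 0)
    (hy : ∑ j, y j = 0) (hxy : x ≠ y) : ∃ u v, u ≠ v ∧ x u ≠ y u ∧ x v ≠ y v := by
  obtain ⟨u, hu⟩ := Function.ne_iff.1 hxy
  by_contra hcon
  push Not at hcon
  have h0 : ∑ j, (x j - y j) = 0 := by rw [Finset.sum_sub_distrib, hx, hy, sub_zero]
  rw [Finset.sum_eq_single u] at h0
  · exact hu (sub_eq_zero.1 h0)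
  · intro v _ hv
    exact sub_eq_zero.2 (hcon u v (Ne.symm hv) hu)
  · simp

/-- For `2 ≤ b < p^e` and every `1 ≤ i ≤ p^{e-1}`, the cyclic code
`C_i = ⟨(x-1)^i⟩` satisfies `b + 1 ≤ d_b(C_i) ≤ 2b`. -/
theorem b_distance_Ci_bounds (p m e : ℕ) [Fact p.Prime] (hm : 0 < m)
    (he : 0 < e) (b : ℕ) (hb2 : 2 ≤ b) (hb : b < p ^ e)
    (i : ℕ) (hi1 : 1 ≤ i) (hi2 : i ≤ p ^ (e - 1)) :
    b + 1 ≤ dBcode b (Ccode p m e i) ∧ dBcode b (Ccode p m e i) ≤ 2 * b := by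
  have hp : p.Prime := Fact.out
  have hq : p ^ (e - 1) < p ^ e := Nat.pow_lt_pow_right hp.one_lt (by omega)
  have hq0 : 0 < p ^ (e - 1) := pow_pos hp.pos _
  let u : Fin (p ^ e) := ⟨p ^ (e - 1), hq⟩
  let v : Fin (p ^ e) := ⟨0, by omega⟩
  have huv : u ≠ v := fun h => by
    have : p ^ (e - 1) = 0 := congrArg Fin.val h
    omega
  let c : Fin (p ^ e) → GaloisField p m := Pi.single u 1 - Pi.single v 1
  have hc : c ∈ Ccode p m e i := by
    refine ⟨(X - 1) ^ (p ^ (e - 1) - i), ?_⟩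
    have h1 : (X - 1 : Polynomial (GaloisField p m)) ^ i * (X - 1) ^ (p ^ (e - 1) - i)
        = X ^ (p ^ (e - 1)) - 1 := by
      rw [← pow_add, Nat.add_sub_cancel' hi2, sub_pow_char_pow, one_pow]
    have h2 : (∑ j : Fin (p ^ e), Polynomial.C (c j) * X ^ (j : ℕ))
        = X ^ (p ^ (e - 1)) - 1 := by
      have h3 : ∀ w : Fin (p ^ e), (∑ j : Fin (p ^ e),
          Polynomial.C ((Pi.single w 1 : Fin (p ^ e) → GaloisField p m) j) * X ^ (j : ℕ))
          = X ^ (w : ℕ) := by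
        intro w
        rw [Finset.sum_eq_single w]
        · simp
        · intro j _ hj
          simp [hj]
        · simp
      simp only [c, Pi.sub_apply, C_sub, sub_mul, Finset.sum_sub_distrib, h3]
      simp [u, v]
    rw [h1, h2, sub_self]
    exact dvd_zero _
  have h0 : (0 : Fin (p ^ e) → GaloisField p m) ∈ Ccode p m e i := ⟨0, by simp⟩
  have hne : c ≠ 0 := fun h => by
    have := congrFun h u
    simp [c, huv] at this
  letI := Classical.decEq (GaloisField p m)
  constructor
  · refine le_csInf ⟨_, c, hc, 0, h0, hne, rfl⟩ ?_
    rintro d ⟨x, hx, y, hy, hxy, rfl⟩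
    obtain ⟨a, a', h1, h2, h3⟩ := aux_two x y (aux_sum p m e i hi1 x hx)
      (aux_sum p m e i hi1 y hy) hxy
    exact aux_lower_s7 hb2 hb x y a a' h1 h2 h3
  · have hle : dBcode b (Ccode p m e i) ≤ hammingDist (piB b c) (piB b 0) :=
      Nat.sInf_le ⟨c, hc, 0, h0, hne, rfl⟩
    refine hle.trans ?_
    refine aux_upper_s7 hb c 0 u v ?_
    intro w h1 h2
    simp [c, h1, h2]
end

section
/- Let p be a prime, m a positive integer, and b an integer with 2 ≤ b ≤ p. Consider cyclic codes of length p over 𝔽_{p^m} (the case e = 1). Then for every i with 0 ≤ i ≤ p − b, the cyclic code C_i = ⟨(x−1)^i⟩ ⊆ 𝔽_{p^m}[x]/⟨x^p−1⟩ satisfies d_b(C_i) = i + b. -/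
open Polynomial

lemma aux_weight {F : Type*} [Field F] (p : ℕ) [CharP F p] (n : ℕ) :
    ∀ f : F[X], (∀ j ∈ f.support, j < p) → (X - 1) ^ n ∣ f → f.support.card ≤ n → f = 0 := by
  induction n with
  | zero =>
    intro f _ _ h
    simpa using h
  | succ n ih =>
    intro f hd hdiv hcard
    by_contra hf
    obtain ⟨k, hk⟩ := Polynomial.support_nonempty.2 hf
    have hc : ∀ j : ℕ, (X * derivative f - C (k : F) * f).coeff j = ((j : F) - k) * f.coeff j := by
      intro j
      rw [coeff_sub, coeff_C_mul]
      cases j with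
      | zero => simp
      | succ j => rw [coeff_X_mul, coeff_derivative]; push_cast; ring
    have hsup : (X * derivative f - C (k : F) * f).support ⊆ f.support.erase k := by
      intro j hj
      rw [mem_support_iff, hc] at hj
      rw [Finset.mem_erase, mem_support_iff]
      refine ⟨?_, right_ne_zero_of_mul hj⟩
      rintro rfl
      simp at hj
    have hg : X * derivative f - C (k : F) * f = 0 := by
      apply ih
      · intro j hj
        exact hd j (Finset.mem_of_mem_erase (hsup hj))
      · apply dvd_sub
        · apply Dvd.dvd.mul_left
          obtain ⟨q, rfl⟩ := hdiv
          rw [derivative_mul, derivative_pow]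
          simp only [Nat.add_sub_cancel]
          apply dvd_add
          · exact ⟨C ((n + 1 : ℕ) : F) * derivative (X - 1) * q, by ring⟩
          · exact ⟨(X - 1) * derivative q, by ring⟩
        · exact Dvd.dvd.mul_left ((pow_dvd_pow _ (Nat.le_succ n)).trans hdiv) _
      · have := Finset.card_le_card hsup
        rw [Finset.card_erase_of_mem hk] at this
        omega
    have hz : ∀ j, j ≠ k → f.coeff j = 0 := by
      intro j hj
      by_contra hne
      have h1 := hc j
      rw [hg, coeff_zero] at h1
      have h2 := (mul_eq_zero.1 h1.symm).resolve_right hne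
      have h3 : (j : F) = (k : F) := sub_eq_zero.1 h2
      rw [CharP.natCast_eq_natCast F p] at h3
      have := Nat.ModEq.eq_of_lt_of_lt h3 (hd j (mem_support_iff.2 hne)) (hd k hk)
      exact hj this
    have hmon : f = monomial k (f.coeff k) := by
      ext j
      rw [coeff_monomial]
      split_ifs with h
      · rw [h]
      · exact hz j (fun h' => h h'.symm)
    have he : f.eval 1 = 0 := by
      obtain ⟨q, rfl⟩ := hdiv
      simp
    rw [hmon, eval_monomial] at he
    simp at he
    exact (mem_support_iff.1 hk) he

lemma aux_set (p b : ℕ) [Fact p.Prime] (hb : 1 ≤ b) (hbp : b ≤ p) (S T : Finset (Fin p))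
    (hS : S.Nonempty)
    (hT : ∀ a : Fin p, (∃ j < b, ∃ s ∈ S, ((a : ℕ) + j) % p = s) → a ∈ T) :
    min p (S.card + b - 1) ≤ T.card := by
  classical
  have hp : 0 < p := (Fact.out : p.Prime).pos
  have inj : Function.Injective (fun a : Fin p => ((a : ℕ) : ZMod p)) := by
    intro a c h
    have h' : ((a : ℕ) : ZMod p) = ((c : ℕ) : ZMod p) := h
    rw [ZMod.natCast_eq_natCast_iff] at h'
    exact Fin.ext (Nat.ModEq.eq_of_lt_of_lt h' a.2 c.2)
  let A := S.image (fun a : Fin p => ((a : ℕ) : ZMod p))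
  let B := (Finset.range b).image (fun j : ℕ => -((j : ℕ) : ZMod p))
  have hA : A.card = S.card := Finset.card_image_of_injective _ inj
  have hB : B.card = b := by
    have : B.card = (Finset.range b).card := by
      apply Finset.card_image_of_injOn
      intro x hx y hy h
      have h' : ((x : ℕ) : ZMod p) = ((y : ℕ) : ZMod p) := neg_injective h
      rw [ZMod.natCast_eq_natCast_iff] at h'
      simp at hx hy
      exact Nat.ModEq.eq_of_lt_of_lt h' (by omega) (by omega)
    simpa using this
  have hcd := ZMod.cauchy_davenport (p := p) Fact.out (s := A) (t := B) (hS.image _)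
    ((Finset.nonempty_range_iff.2 (by omega)).image _)
  rw [hA, hB] at hcd
  refine hcd.trans ?_
  rw [← Finset.card_image_of_injective T inj]
  apply Finset.card_le_card
  intro z hz
  obtain ⟨u, hu, v, hv, rfl⟩ := Finset.mem_add.1 hz
  obtain ⟨s, hs, rfl⟩ := Finset.mem_image.1 hu
  obtain ⟨j, hj, rfl⟩ := Finset.mem_image.1 hv
  rw [Finset.mem_image]
  have : NeZero p := ⟨hp.ne'⟩
  refine ⟨⟨(((s : ℕ) : ZMod p) + -(j : ZMod p)).val, ZMod.val_lt _⟩, hT _ ⟨j, by simpa using hj, s, hs, ?_⟩, ?_⟩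
  · have : (((((s : ℕ) : ZMod p) + -(j : ZMod p)).val + j : ℕ) : ZMod p) = ((s : ℕ) : ZMod p) := by
      push_cast
      rw [ZMod.natCast_zmod_val]
      ring
    rw [ZMod.natCast_eq_natCast_iff] at this
    have h2 : _ % p = _ % p := this
    rw [Nat.mod_eq_of_lt s.2] at h2
    exact h2
  · simp

lemma aux_coeff {F : Type*} [Field F] (n : ℕ) (c : Fin n → F) (k : ℕ) :
    (∑ j : Fin n, Polynomial.C (c j) * X ^ (j : ℕ)).coeff k =
      if h : k < n then c ⟨k, h⟩ else 0 := by
  rw [finsetSum_coeff]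
  simp only [coeff_C_mul, coeff_X_pow]
  split_ifs with h
  · rw [Finset.sum_eq_single ⟨k, h⟩]
    · simp
    · intro j _ hj
      have : k ≠ j := fun h' => hj (Fin.ext h'.symm)
      simp [this]
    · simp
  · apply Finset.sum_eq_zero
    intro j _
    have : k ≠ j := by have := j.2; omega
    simp [this]

/-- A vector-level weight bound for the code. -/
lemma aux_low {F : Type*} [Field F] [DecidableEq F] (p : ℕ) [Fact p.Prime] [CharP F p]
    (n : ℕ) (hn : n = p)
    (b : ℕ) (hb2 : 2 ≤ b) (hb : b ≤ p) (i : ℕ) (hi : i ≤ p - b) (x y : Fin n → F) (hxy : x ≠ y)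
    (f g : F[X])
    (hx : (X ^ n - 1 : F[X]) ∣ (∑ j : Fin n, C (x j) * X ^ (j : ℕ)) - (X - 1) ^ i * f)
    (hy : (X ^ n - 1 : F[X]) ∣ (∑ j : Fin n, C (y j) * X ^ (j : ℕ)) - (X - 1) ^ i * g) :
    i + b ≤ hammingDist (piB b x) (piB b y) := by
  subst hn
  set P : F[X] := ∑ j : Fin n, C ((x - y) j) * X ^ (j : ℕ) with hP
  have hPc : ∀ k, P.coeff k = if h : k < n then (x - y) ⟨k, h⟩ else 0 := aux_coeff n (x - y)
  have hfrob : (X ^ n - 1 : F[X]) = (X - 1) ^ n := by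
    rw [sub_pow_char]; simp
  have hdvd : (X - 1) ^ i ∣ P := by
    have h1 : (X - 1 : F[X]) ^ i ∣ X ^ n - 1 := by
      rw [hfrob]; exact pow_dvd_pow _ (by omega)
    have h2 := (dvd_sub_left (Dvd.intro f rfl)).1 (h1.trans hx)
    have h3 := (dvd_sub_left (Dvd.intro g rfl)).1 (h1.trans hy)
    have h4 := dvd_sub h2 h3
    rw [← Finset.sum_sub_distrib] at h4
    convert h4 using 2 with j
    simp [sub_mul]
  have hP0 : P ≠ 0 := by
    intro h
    apply hxy
    funext a
    have := hPc a
    rw [h] at this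
    simp at this
    exact sub_eq_zero.1 this.symm
  let S : Finset (Fin n) := Finset.univ.filter (fun a => x a ≠ y a)
  have hsup : P.support = S.image (fun a : Fin n => (a : ℕ)) := by
    ext k
    simp only [mem_support_iff, hPc, Finset.mem_image, S, Finset.mem_filter, Finset.mem_univ,
      true_and]
    constructor
    · intro h
      split_ifs at h with hk
      · exact ⟨⟨k, hk⟩, sub_ne_zero.1 h, rfl⟩
      · exact absurd rfl h
    · rintro ⟨a, ha, rfl⟩
      simpa [sub_eq_zero] using ha
  have hScard : P.support.card = S.card := by
    rw [hsup]; exact Finset.card_image_of_injective _ Fin.val_injective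
  have hgt : i < S.card := by
    by_contra hle
    apply hP0
    apply aux_weight n i P _ hdvd (by omega)
    intro j hj
    rw [hsup] at hj
    obtain ⟨a, _, rfl⟩ := Finset.mem_image.1 hj
    exact a.2
  have hmain := aux_set n b (by omega) hb S
    (Finset.univ.filter (fun a => piB b x a ≠ piB b y a)) (Finset.card_pos.1 (by omega)) (by
      rintro a ⟨j, hj, s, hs, has⟩
      simp only [S, Finset.mem_filter, Finset.mem_univ, true_and] at hs ⊢
      intro h
      apply hs
      have h1 := congrFun h ⟨j, hj⟩
      simp only [piB, has] at h1
      exact h1)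
  have hd : hammingDist (piB b x) (piB b y) =
    (Finset.univ.filter (fun a => piB b x a ≠ piB b y a)).card := by
    rw [hammingDist]
  rw [hd]
  refine le_trans ?_ hmain
  rw [le_min_iff]
  omega

lemma aux_up {F : Type*} [Field F] [DecidableEq F] (n : ℕ)
    (b : ℕ) (hb2 : 2 ≤ b) (hb : b ≤ n) (i : ℕ) (x : Fin n → F)
    (hx : ∀ a : Fin n, i < a → x a = 0) :
    hammingDist (piB b x) (piB b 0) ≤ i + b := by
  rw [hammingDist]
  rw [← Finset.card_image_of_injective _ (Fin.val_injective (n := n))]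
  have hsub : Finset.image Fin.val (Finset.univ.filter (fun a => piB b x a ≠ piB b 0 a)) ⊆
      Finset.range (i + 1) ∪ Finset.Ico (n - b + 1) n := by
    intro k hk
    obtain ⟨a, ha, rfl⟩ := Finset.mem_image.1 hk
    simp only [Finset.mem_filter, Finset.mem_univ, true_and] at ha
    by_contra hcon
    simp at hcon
    apply ha
    funext j
    have ha2 := a.2
    have hj := j.2
    have : (a : ℕ) + j < n := by omega
    simp only [piB, Nat.mod_eq_of_lt this]
    rw [hx]
    · rfl
    · show i < (a : ℕ) + j
      omega
  refine (Finset.card_le_card hsub).trans ((Finset.card_union_le _ _).trans ?_)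
  simp
  omega

/-- For `2 ≤ b ≤ p` and `0 ≤ i ≤ p - b`, the cyclic code
`C_i = ⟨(x-1)^i⟩ ⊆ 𝔽_{p^m}[x]/⟨x^p-1⟩` of length `p` (the case `e = 1`)
satisfies `d_b(C_i) = i + b`. -/
theorem b_distance_length_p (p m : ℕ) [Fact p.Prime] (hm : 0 < m)
    (b : ℕ) (hb2 : 2 ≤ b) (hb : b ≤ p) (i : ℕ) (hi : i ≤ p - b) :
    dBcode b (Ccode p m 1 i) = i + b := by
  classical
  have hdeg : ((X - 1 : (GaloisField p m)[X]) ^ i).natDegree = i := by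
    have := natDegree_X_sub_C (1 : GaloisField p m)
    rw [C_1] at this
    rw [natDegree_pow, this, mul_one]
  have hmonic : ((X - 1 : (GaloisField p m)[X]) ^ i).Monic := by
    have := monic_X_sub_C (1 : GaloisField p m)
    rw [C_1] at this
    exact this.pow i
  let x : Fin (p ^ 1) → GaloisField p m := fun a => ((X - 1 : (GaloisField p m)[X]) ^ i).coeff a
  have hx : x ∈ Ccode p m 1 i := by
    refine ⟨1, ?_⟩
    have : (∑ j : Fin (p ^ 1), C (x j) * X ^ (j : ℕ)) - (X - 1) ^ i * 1 = 0 := by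
      rw [mul_one, sub_eq_zero]
      ext k
      rw [aux_coeff]
      split_ifs with h
      · rfl
      · rw [coeff_eq_zero_of_natDegree_lt]
        rw [hdeg]
        rw [pow_one] at h
        omega
    rw [this]
    exact dvd_zero _
  have h0 : (0 : Fin (p ^ 1) → GaloisField p m) ∈ Ccode p m 1 i := ⟨0, by simp⟩
  have hx0 : x ≠ 0 := by
    intro h
    have h1 := congrFun h ⟨i, by rw [pow_one]; omega⟩
    have h2 : ((X - 1 : (GaloisField p m)[X]) ^ i).coeff i = 1 := by
      have := hmonic.coeff_natDegree
      rwa [hdeg] at this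
    exact one_ne_zero (h2.symm.trans h1)
  unfold dBcode
  apply le_antisymm
  · refine le_trans (Nat.sInf_le (by exact ⟨x, hx, 0, h0, hx0, rfl⟩)) ?_
    apply @aux_up _ _ (Classical.decEq _) (p ^ 1) b hb2 (by rw [pow_one]; exact hb) i x
    intro a ha
    apply coeff_eq_zero_of_natDegree_lt
    rw [hdeg]
    exact ha
  · refine le_csInf (by exact ⟨_, x, hx, 0, h0, hx0, rfl⟩) ?_
    rintro d ⟨u, ⟨f, hu⟩, v, ⟨g, hv⟩, huv, rfl⟩
    exact @aux_low _ _ (Classical.decEq _) p _ _ (p ^ 1) (pow_one p) b hb2 hb i hi u v huv f g hu hv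
end

section
/- Let p be a prime, m a positive integer, e an integer with e ≥ 2, and b an integer with b ≥ 2. Let i be an integer with 1 ≤ i ≤ p^{e−1} such that i + b ≤ p^e and i ≤ b. Then the cyclic code C_i = ⟨(x−1)^i⟩ ⊆ 𝔽_{p^m}[x]/⟨x^{p^e}−1⟩ satisfies d_b(C_i) = i + b. -/
open Polynomial

lemma shift_dvd {F : Type*} [Field F] (n i : ℕ) (c : ℕ → F)
    (hper : ∀ k, c (k + n) = c k)
    (hX : ((X - 1 : F[X]) ^ i) ∣ (X ^ n - 1 : F[X]))
    (h0 : ((X - 1 : F[X]) ^ i) ∣ ∑ k ∈ Finset.range n, C (c k) * X ^ k) (u : ℕ) :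
    ((X - 1 : F[X]) ^ i) ∣ ∑ k ∈ Finset.range n, C (c (u + k)) * X ^ k := by
  induction u with
  | zero => simpa using h0
  | succ u ih =>
    have key : X * (∑ k ∈ Finset.range n, C (c (u + 1 + k)) * X ^ k : F[X])
        = (∑ k ∈ Finset.range n, C (c (u + k)) * X ^ k) + C (c u) * (X ^ n - 1) := by
      have h1 := Finset.sum_range_succ (fun k => (C (c (u + k)) * X ^ k : F[X])) n
      have h2 := Finset.sum_range_succ' (fun k => (C (c (u + k)) * X ^ k : F[X])) n
      rw [h1] at h2
      have h3 : X * (∑ k ∈ Finset.range n, C (c (u + 1 + k)) * X ^ k : F[X])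
          = ∑ k ∈ Finset.range n, C (c (u + (k + 1))) * X ^ (k + 1) := by
        rw [Finset.mul_sum]
        refine Finset.sum_congr rfl fun k _ => ?_
        rw [show u + 1 + k = u + (k + 1) by ring]
        ring
      rw [h3]
      rw [hper] at h2
      simp only [add_zero, pow_zero, mul_one] at h2
      linear_combination -h2
    have hd : ((X - 1 : F[X]) ^ i) ∣ X * (∑ k ∈ Finset.range n, C (c (u + 1 + k)) * X ^ k : F[X]) := by
      rw [key]
      exact dvd_add ih (Dvd.dvd.mul_left hX _)
    have hcop : IsCoprime ((X - 1 : F[X]) ^ i) X := by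
      apply IsCoprime.pow_left
      exact ⟨-1, 1, by ring⟩
    exact hcop.dvd_of_dvd_mul_left hd

lemma lower_aux {F : Type*} [Field F] [DecidableEq F] (n i b : ℕ) (hi1 : 1 ≤ i) (hib : i + b ≤ n)
    (hib' : i ≤ b) (x y : Fin n → F) (hne : x ≠ y)
    (hX : ((X - 1 : F[X]) ^ i) ∣ (X ^ n - 1 : F[X]))
    (hx : ((X - 1 : F[X]) ^ i) ∣ ∑ j : Fin n, C (x j) * X ^ (j : ℕ))
    (hy : ((X - 1 : F[X]) ^ i) ∣ ∑ j : Fin n, C (y j) * X ^ (j : ℕ)) :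
    i + b ≤ hammingDist (piB b x) (piB b y) := by
  have hn : 0 < n := by omega
  set c : ℕ → F := fun k => x ⟨k % n, Nat.mod_lt _ hn⟩ - y ⟨k % n, Nat.mod_lt _ hn⟩ with hc
  have hcm : ∀ k, c (k % n) = c k := by intro k; simp [hc]
  have hper : ∀ k, c (k + n) = c k := by intro k; simp [hc]
  have h0 : ((X - 1 : F[X]) ^ i) ∣ ∑ k ∈ Finset.range n, C (c k) * X ^ k := by
    have := dvd_sub hx hy
    rw [← Finset.sum_sub_distrib] at this
    rw [← Fin.sum_univ_eq_sum_range (fun k => (C (c k) * X ^ k : F[X])) n]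
    convert this using 2 with j
    simp [hc, Nat.mod_eq_of_lt j.2, sub_mul]
  have hW : ∀ t : ℕ, ∀ j < b, c (t + j) ≠ 0 →
      piB b x ⟨t % n, Nat.mod_lt _ hn⟩ ≠ piB b y ⟨t % n, Nat.mod_lt _ hn⟩ := by
    intro t j hj hcj heq
    have := congrFun heq ⟨j, hj⟩
    simp only [piB, Nat.mod_add_mod] at this
    exact hcj (by simp only [hc]; rw [this, sub_self])
  unfold hammingDist
  by_cases hall : ∀ t : Fin n, piB b x t ≠ piB b y t
  · rw [Finset.filter_true_of_mem (fun t _ => hall t)]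
    simpa using hib
  push Not at hall
  obtain ⟨t0, ht0⟩ := hall
  have hz : ∀ j < b, c (t0 + j) = 0 := by
    intro j hj
    by_contra hcon
    apply hW t0 j hj hcon
    simpa [Nat.mod_eq_of_lt t0.2] using ht0
  have hex : ∃ k, c (t0 + b + k) ≠ 0 := by
    obtain ⟨j, hj⟩ := Function.ne_iff.1 hne
    have hcj : c j ≠ 0 := by
      simpa [hc, Nat.mod_eq_of_lt j.2, sub_eq_zero] using hj
    have hper2 : ∀ q k, c (k + n * q) = c k := by
      intro q k; simp [hc]
    refine ⟨j + n * (t0 + b) - (t0 + b), ?_⟩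
    have : t0 + b ≤ n * (t0 + b) := Nat.le_mul_of_pos_left _ hn
    rw [show (t0 : ℕ) + b + (j + n * (t0 + b) - (t0 + b)) = j + n * (t0 + b) by omega, hper2]
    exact hcj
  classical
  have hk := Nat.find_spec hex
  have hkmin : ∀ k' < Nat.find hex, c (t0 + b + k') = 0 := by
    intro k' hk'
    have := Nat.find_min hex hk'
    simpa using this
  generalize Nat.find hex = k at hk hkmin
  obtain ⟨u, hu⟩ : ∃ u, u = (t0 : ℕ) + b + k := ⟨_, rfl⟩
  rw [← hu] at hk
  have hzu : ∀ j, 1 ≤ j → j ≤ b → c (u - j) = 0 := by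
    intro j h1 h2
    rcases Nat.lt_or_ge k j with h | h
    · rw [show u - j = t0 + (b + k - j) by omega]
      exact hz _ (by omega)
    · rw [show u - j = t0 + b + (k - j) by omega]
      exact hkmin _ (by omega)
  have hzn : ∀ s, n - b ≤ s → s < n → c (u + s) = 0 := by
    intro s h1 h2
    rw [show u + s = (u - (n - s)) + n by omega, hper]
    exact hzu _ (by omega) (by omega)
  have hdvd := shift_dvd n i c hper hX h0 u
  set G : F[X] := ∑ k ∈ Finset.range n, C (c (u + k)) * X ^ k with hG
  have hcoeff : ∀ s, G.coeff s = if s < n then c (u + s) else 0 := by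
    intro s
    simp [hG, Polynomial.finset_sum_coeff, Polynomial.coeff_X_pow]
  have hG0 : G ≠ 0 := by
    intro h
    have := hcoeff 0
    rw [h] at this
    simp [hn] at this
    exact hk this.symm
  obtain ⟨d, hd⟩ : ∃ d, d = G.natDegree := ⟨_, rfl⟩
  have hdi : i ≤ d := by
    have := Polynomial.natDegree_le_of_dvd hdvd hG0
    have h2 : ((X - 1 : F[X]) ^ i).natDegree = i := by
      rw [Polynomial.natDegree_pow, ← C_1, natDegree_X_sub_C, mul_one]
    omega
  have hlead : G.coeff d ≠ 0 := by
    rw [hd]; simpa using hG0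
  rw [hcoeff] at hlead
  have hdn : d < n := by
    by_contra h
    simp [h] at hlead
  rw [if_pos hdn] at hlead
  have hdb : d < n - b := by
    by_contra h
    exact hlead (hzn d (by omega) hdn)
  set φ : ℕ → Fin n := fun s => ⟨(u + 1 - b + s) % n, Nat.mod_lt _ hn⟩ with hφ
  have hub : b ≤ u := by omega
  have hcard : (Finset.range b ∪ Finset.Ico (d - i + b) (d + b)).card = i + b := by
    rw [Finset.card_union_of_disjoint]
    · simp; omega
    · rw [Finset.disjoint_left]
      intro a
      simp
      omega
  rw [← hcard]
  apply Finset.card_le_card_of_injOn φ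
  · intro s hs
    simp only [Finset.coe_union, Set.mem_union, Finset.mem_coe, Finset.mem_range, Finset.mem_Ico] at hs
    simp only [Finset.coe_filter, Finset.mem_univ, true_and, Set.mem_setOf_eq]
    rcases hs with hs | hs
    · apply hW _ (b - 1 - s) (by omega)
      rw [show u + 1 - b + s + (b - 1 - s) = u by omega]
      exact hk
    · apply hW _ (d + b - 1 - s) (by omega)
      rw [show u + 1 - b + s + (d + b - 1 - s) = u + d by omega]
      exact hlead
  · intro s hs s' hs' h
    simp only [Finset.coe_union, Set.mem_union, Finset.mem_coe, Finset.mem_range, Finset.mem_Ico] at hs hs'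
    simp only [hφ, Fin.mk.injEq] at h
    have h' : s ≡ s' [MOD n] := Nat.ModEq.add_left_cancel' _ h
    exact Nat.ModEq.eq_of_lt_of_lt h' (by omega) (by omega)

lemma upper_aux {F : Type*} [Field F] [DecidableEq F] (n i b : ℕ) (hib : i + b ≤ n) (hb : 1 ≤ b)
    (x : Fin n → F) (hx : ∀ j : Fin n, i < j → x j = 0) :
    hammingDist (piB b x) (piB b 0) ≤ i + b := by
  unfold hammingDist
  have : (Finset.range (i + 1) ∪ Finset.Ico (n + 1 - b) n).card ≤ i + b := by
    refine (Finset.card_union_le _ _).trans ?_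
    simp; omega
  refine le_trans ?_ this
  apply Finset.card_le_card_of_injOn (fun t : Fin n => (t : ℕ))
  · intro t ht
    simp only [Finset.coe_filter, Finset.mem_univ, true_and, Set.mem_setOf_eq] at ht
    simp only [Finset.coe_union, Set.mem_union, Finset.mem_coe, Finset.mem_range, Finset.mem_Ico]
    by_contra hcon
    apply ht
    funext j
    simp only [piB, Pi.zero_apply]
    apply hx
    have := t.2
    have := j.2
    show i < ((t : ℕ) + j) % n
    rw [Nat.mod_eq_of_lt (by omega)]
    omega
  · exact fun a _ b _ h => Fin.ext h

/-- For `e ≥ 2`, `b ≥ 2`, and `1 ≤ i ≤ p^{e-1}` with `i + b ≤ p^e` and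
`i ≤ b`, the cyclic code `C_i = ⟨(x-1)^i⟩ ⊆ 𝔽_{p^m}[x]/⟨x^{p^e}-1⟩`
satisfies `d_b(C_i) = i + b`. -/
theorem b_distance_Ci_eq (p m e : ℕ) [Fact p.Prime] (hm : 0 < m) (he : 2 ≤ e)
    (b : ℕ) (hb2 : 2 ≤ b) (i : ℕ) (hi1 : 1 ≤ i) (hi2 : i ≤ p ^ (e - 1))
    (hib : i + b ≤ p ^ e) (hib' : i ≤ b) :
    dBcode b (Ccode p m e i) = i + b := by
  classical
  have hX : ((X - 1 : (GaloisField p m)[X]) ^ i) ∣ (X ^ (p ^ e) - 1 : (GaloisField p m)[X]) := by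
    have : (X ^ (p ^ e) - 1 : (GaloisField p m)[X]) = (X - 1) ^ (p ^ e) := by
      rw [sub_pow_char_pow, one_pow]
    rw [this]
    exact pow_dvd_pow _ (by omega)
  have hmem : ∀ c ∈ Ccode p m e i, ((X - 1 : (GaloisField p m)[X]) ^ i) ∣
      ∑ j : Fin (p ^ e), C (c j) * X ^ (j : ℕ) := by
    rintro c ⟨f, hf⟩
    have := dvd_add (hX.trans hf) (Dvd.intro f rfl : ((X - 1 : (GaloisField p m)[X]) ^ i) ∣ _)
    simpa using this
  have hdeg : ((X - 1 : (GaloisField p m)[X]) ^ i).natDegree = i := by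
    rw [Polynomial.natDegree_pow, ← C_1, natDegree_X_sub_C, mul_one]
  let x : Fin (p ^ e) → GaloisField p m := fun j => ((X - 1 : (GaloisField p m)[X]) ^ i).coeff j
  have hxmem : x ∈ Ccode p m e i := by
    refine ⟨1, ?_⟩
    have h1 := Polynomial.as_sum_range_C_mul_X_pow' (p := (X - 1 : (GaloisField p m)[X]) ^ i)
      (n := p ^ e) (by omega)
    have h2 := Fin.sum_univ_eq_sum_range
      (fun k => (C (((X - 1 : (GaloisField p m)[X]) ^ i).coeff k) * X ^ k : (GaloisField p m)[X])) (p ^ e)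
    have h3 : (∑ j : Fin (p ^ e), C (x j) * X ^ (j : ℕ)) = (X - 1 : (GaloisField p m)[X]) ^ i :=
      h2.trans h1.symm
    rw [h3]
    simp
  have h0mem : (0 : Fin (p ^ e) → GaloisField p m) ∈ Ccode p m e i := ⟨0, by simp⟩
  have hx0 : x ≠ 0 := by
    intro h
    have h4 : ((X - 1 : (GaloisField p m)[X]) ^ i).coeff i = 0 :=
      congrFun h ⟨i, by omega⟩
    have h5 : ((X - 1 : (GaloisField p m)[X]) ^ i).Monic := by
      rw [← C_1]; exact (monic_X_sub_C _).pow i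
    have h6 := h5.coeff_natDegree
    rw [hdeg, h4] at h6
    exact zero_ne_one h6
  unfold dBcode
  apply le_antisymm
  · refine le_trans (Nat.sInf_le ⟨x, hxmem, 0, h0mem, hx0, rfl⟩) ?_
    apply upper_aux (hib := hib) (hb := by omega)
    intro j hj
    exact Polynomial.coeff_eq_zero_of_natDegree_lt (by omega)
  · refine le_csInf ⟨_, x, hxmem, 0, h0mem, hx0, rfl⟩ ?_
    rintro d ⟨a, ha, a', ha', hne, rfl⟩
    exact lower_aux _ i b hi1 hib hib' a a' hne hX (hmem a ha) (hmem a' ha')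
end

section
/- Let p be a prime, m a positive integer, and e, k integers with e ≥ 2 and 1 ≤ k ≤ e−1. Let g(x) = Σ_{j=0}^d g_j x^j be a nonzero polynomial in 𝔽_{p^m}[x] of degree d < p^{e−k}, let b be an integer with 2 ≤ b ≤ p^e − d, and let c(x) = (x−1)^{p^e − p^{e−k}} g(x), viewed as an element of 𝔽_{p^m}[x]/⟨x^{p^e}−1⟩. If d ≤ p^{e−k} − b, or if g_j = 0 for every j with 0 ≤ j ≤ b − p^{e−k} + d − 1, then ω_b(c(x)) = p^k · ω_b(g(x)). -/
open Polynomial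

/-- The `b`-weight `ω_b(x) = ω_H(π_b(x))` of `x ∈ F^n`: the number of nonzero
`b`-tuples in the `b`-symbol read vector of `x`. -/
noncomputable def wB {F : Type*} [Zero F] {n : ℕ} (b : ℕ) (x : Fin n → F) : ℕ :=
  letI := Classical.decEq F
  (Finset.univ.filter fun i => piB b x i ≠ fun _ => (0 : F)).card

/-- The coefficient vector in `F^n` of a polynomial (of degree `< n`). -/
noncomputable def coeffVec {F : Type*} [Semiring F] (n : ℕ) (f : Polynomial F) :
    Fin n → F :=
  fun j => f.coeff j

open Classical in
lemma wB_eq_count {F : Type*} [Zero F] (n b : ℕ) (f : ℕ → F) :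
    wB b (fun j : Fin n => f j) = Nat.count (fun i => ∃ j < b, f ((i + j) % n) ≠ 0) n := by
  rw [Nat.count_eq_card_filter_range]
  unfold wB
  refine Finset.card_bij (fun i _ => (i : ℕ)) ?_ ?_ ?_
  · intro i hi
    simp only [Finset.mem_filter, Finset.mem_univ, true_and, Finset.mem_range] at hi ⊢
    refine ⟨i.2, ?_⟩
    by_contra hcon
    push Not at hcon
    exact hi (funext fun j => hcon j j.2)
  · intro i _ j _ h
    exact Fin.ext h
  · intro i hi
    simp only [Finset.mem_filter, Finset.mem_range] at hi
    obtain ⟨hi, j, hj, hne⟩ := hi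
    refine ⟨⟨i, hi⟩, ?_, rfl⟩
    simp only [Finset.mem_filter, Finset.mem_univ, true_and]
    intro h
    exact hne (congrFun h ⟨j, hj⟩)

open Classical in
lemma count_periodic (Q : ℕ → Prop) (q P : ℕ) (hQ : ∀ i, Q (q + i) ↔ Q i) :
    Nat.count Q (q * P) = P * Nat.count Q q := by
  induction P with
  | zero => simp
  | succ P ih =>
    have : q * (P + 1) = q + q * P := by ring
    rw [this, Nat.count_add]
    simp only [hQ]
    rw [ih]; ring

open Classical in
lemma count_window {F : Type*} [Zero F] (f : ℕ → F) (l d b M : ℕ) (hb : 1 ≤ b)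
    (hdM : d < M) (hld : l ≤ d) (hM : d + b ≤ M + l)
    (hf : ∀ s, f s ≠ 0 → l ≤ s ∧ s ≤ d) :
    Nat.count (fun i => ∃ j < b, f ((i + j) % M) ≠ 0) M =
      ((Finset.Icc l (d + b - 1)).filter
        (fun u => ∃ j < b, j ≤ u ∧ f (u - j) ≠ 0)).card := by
  rw [Nat.count_eq_card_filter_range]
  symm
  refine Finset.card_bij (fun u _ => (u + (M - (b - 1))) % M) ?_ ?_ ?_
  · intro u hu
    simp only [Finset.mem_filter, Finset.mem_Icc, Finset.mem_range] at hu ⊢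
    obtain ⟨hu, j, hj, hju, hne⟩ := hu
    refine ⟨Nat.mod_lt _ (by omega), b - 1 - j, by omega, ?_⟩
    have h1 := hf _ hne
    have h2 : u + (M - (b - 1)) + (b - 1 - j) = (u - j) + M := by omega
    rw [Nat.mod_add_mod, h2, Nat.add_mod_right, Nat.mod_eq_of_lt (by omega)]
    exact hne
  · intro u hu v hv h
    simp only [Finset.mem_filter, Finset.mem_Icc] at hu hv
    have h' : u ≡ v [MOD M] := Nat.ModEq.add_right_cancel' _ h
    have h3 : (u - l) + l ≡ (v - l) + l [MOD M] := by
      rwa [Nat.sub_add_cancel hu.1.1, Nat.sub_add_cancel hv.1.1]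
    have h4 := Nat.ModEq.eq_of_lt_of_lt (Nat.ModEq.add_right_cancel' _ h3) (by omega) (by omega)
    omega
  · intro i hi
    simp only [Finset.mem_filter, Finset.mem_range] at hi
    obtain ⟨hi, j, hj, hne⟩ := hi
    have h1 := hf _ hne
    have h0 := Nat.mod_lt (i + j) (show M > 0 by omega)
    refine ⟨(i + j) % M + (b - 1 - j), ?_, ?_⟩
    · simp only [Finset.mem_filter, Finset.mem_Icc]
      refine ⟨by omega, b - 1 - j, by omega, by omega, ?_⟩
      rwa [Nat.add_sub_cancel]
    · have h2 : (i + j) % M + (b - 1 - j) + (M - (b - 1)) = (i + j) % M + (M - j) := by omega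
      simp only [h2]
      rw [Nat.mod_add_mod, show i + j + (M - j) = i + M by omega, Nat.add_mod_right,
        Nat.mod_eq_of_lt hi]

lemma coeff_geom {F : Type*} [CommRing F] (g : F[X]) (q P j : ℕ) (hq : g.natDegree < q)
    (hj : j < q * P) :
    ((∑ i ∈ Finset.range P, ((X : F[X]) ^ q) ^ i) * g).coeff j = g.coeff (j % q) := by
  have hdm := Nat.div_add_mod j q
  rw [Finset.sum_mul, finsetSum_coeff, Finset.sum_eq_single (j / q)]
  · rw [← pow_mul, coeff_X_pow_mul', if_pos (by omega)]
    congr 1; omega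
  · intro i _ hi
    rw [← pow_mul, coeff_X_pow_mul']
    split_ifs with h
    · apply coeff_eq_zero_of_natDegree_lt
      have h1 : i ≤ j / q := (Nat.le_div_iff_mul_le (by omega)).2 (by rwa [mul_comm])
      have h2 : q * (i + 1) ≤ q * (j / q) := Nat.mul_le_mul_left _ (by omega)
      rw [Nat.mul_add] at h2
      omega
    · rfl
  · intro h
    exact absurd (Finset.mem_range.2 (Nat.div_lt_of_lt_mul hj)) h

lemma pow_eq_geom {F : Type*} [Field F] (p : ℕ) [Fact p.Prime] [CharP F p] (e k : ℕ)
    (hk : k ≤ e) :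
    ((X : F[X]) - 1) ^ (p ^ e - p ^ (e - k)) =
      ∑ i ∈ Finset.range (p ^ k), ((X : F[X]) ^ (p ^ (e - k))) ^ i := by
  have hp : 0 < p := (Fact.out : p.Prime).pos
  have h0 : ((X : F[X]) - 1) ^ (p ^ (e - k)) ≠ 0 := pow_ne_zero _ (X_sub_C_ne_zero (1 : F))
  apply mul_right_cancel₀ h0
  rw [← pow_add, Nat.sub_add_cancel (Nat.pow_le_pow_right hp (by omega)),
    sub_pow_char_pow, sub_pow_char_pow, one_pow, one_pow, geom_sum_mul, ← pow_mul, ← pow_add,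
    Nat.sub_add_cancel hk]

/-- Let `e ≥ 2`, `1 ≤ k ≤ e-1`, let `g` be a nonzero polynomial over `𝔽_{p^m}`
of degree `d < p^{e-k}`, let `2 ≤ b ≤ p^e - d`, and let
`c(x) = (x-1)^{p^e - p^{e-k}} g(x)`.  If `d ≤ p^{e-k} - b`, or `g_j = 0` for
every `0 ≤ j ≤ b - p^{e-k} + d - 1`, then `ω_b(c(x)) = p^k ω_b(g(x))`. -/
theorem b_weight_lemma_case1 (p m e k : ℕ) [Fact p.Prime] (hm : 0 < m)
    (he : 2 ≤ e) (hk1 : 1 ≤ k) (hk2 : k ≤ e - 1)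
    (g : Polynomial (GaloisField p m)) (hg : g ≠ 0)
    (d : ℕ) (hd : g.natDegree = d) (hdlt : d < p ^ (e - k))
    (b : ℕ) (hb2 : 2 ≤ b) (hb : b ≤ p ^ e - d)
    (hcase : (d : ℤ) ≤ (p : ℤ) ^ (e - k) - b ∨
      ∀ j : ℕ, (j : ℤ) ≤ (b : ℤ) - (p : ℤ) ^ (e - k) + d - 1 → g.coeff j = 0) :
    wB b (coeffVec (p ^ e) ((X - 1) ^ (p ^ e - p ^ (e - k)) * g)) =
      p ^ k * wB b (coeffVec (p ^ e) g) := by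
  classical
  have hp : 0 < p := (Fact.out : p.Prime).pos
  set q := p ^ (e - k) with hq
  have hN : p ^ e = q * p ^ k := by rw [hq, ← pow_add, Nat.sub_add_cancel (by omega)]
  have hqN : q ≤ p ^ e := Nat.pow_le_pow_right hp (by omega)
  have hcase' : (d : ℤ) ≤ (q : ℤ) - b ∨
      ∀ j : ℕ, (j : ℤ) ≤ (b : ℤ) - (q : ℤ) + d - 1 → g.coeff j = 0 := by
    rw [hq]; push_cast; exact hcase
  have hl : g.coeff g.natTrailingDegree ≠ 0 := by
    simpa [trailingCoeff] using hg
  have hld : g.natTrailingDegree ≤ d := hd ▸ g.natTrailingDegree_le_natDegree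
  have hf : ∀ s, g.coeff s ≠ 0 → g.natTrailingDegree ≤ s ∧ s ≤ d := fun s hs =>
    ⟨natTrailingDegree_le_of_ne_zero hs, hd ▸ le_natDegree_of_ne_zero hs⟩
  have hM : d + b ≤ q + g.natTrailingDegree := by
    rcases hcase' with h | h
    · omega
    · by_contra hcon
      exact hl (h _ (by omega))
  have e1 : coeffVec (p ^ e) ((X - 1) ^ (p ^ e - q) * g) =
      fun j : Fin (p ^ e) => (fun i => g.coeff (i % q)) (j : ℕ) := by
    funext j
    unfold coeffVec
    rw [hq, pow_eq_geom p e k (by omega)]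
    exact coeff_geom g _ _ _ (by omega) (hN ▸ j.2)
  have e2 : coeffVec (p ^ e) g = fun j : Fin (p ^ e) => g.coeff (j : ℕ) := rfl
  rw [e1, e2, wB_eq_count (p ^ e) b (fun i => g.coeff (i % q)), wB_eq_count (p ^ e) b g.coeff,
    count_window g.coeff _ d b (p ^ e) (by omega) (by omega) hld (by omega) hf,
    ← count_window g.coeff _ d b q (by omega) hdlt hld hM hf]
  have hmod : ∀ x, x % p ^ e % q = x % q := fun x =>
    Nat.mod_mod_of_dvd x (hN ▸ Dvd.intro _ rfl)
  simp only [hmod]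
  have := count_periodic (fun i => ∃ j < b, g.coeff ((i + j) % q) ≠ 0) q (p ^ k)
    (fun i => by simp only [add_assoc, Nat.add_mod_left])
  rw [← hN] at this
  convert this
end

section
/- Let p be a prime, m a positive integer, e and k integers with e ≥ 2 and 1 ≤ k ≤ e−1, and b an integer with b ≥ 2. Let i be an integer with 0 ≤ i ≤ p^{e−k−1} such that b + i ≤ p^{e−k} and i ≤ b. Then the cyclic code C_{p^e − p^{e−k} + i} = ⟨(x−1)^{p^e − p^{e−k} + i}⟩ ⊆ 𝔽_{p^m}[x]/⟨x^{p^e}−1⟩ satisfies d_b(C_{p^e − p^{e−k} + i}) = p^k (b + i). -/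
open Polynomial

section helpers
variable {F : Type*} [Field F]

lemma bd_rep (N : ℕ) (Q : F[X]) (hQ : Q.degree < N) (q : ℕ) :
    ∑ j ∈ Finset.range (q * N), C (Q.coeff (j % N)) * X ^ j
      = (∑ l ∈ Finset.range q, (X ^ N : F[X]) ^ l) * Q := by
  induction q with
  | zero => simp
  | succ q ih =>
    rw [Nat.succ_mul, Finset.sum_range_add, ih, Finset.sum_range_succ, add_mul]
    congr 1
    have h1 : Q = ∑ t ∈ Finset.range N, C (Q.coeff t) * X ^ t := by
      rcases Nat.eq_zero_or_pos N with h0 | h0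
      · subst h0
        have : Q = 0 := by
          rw [← degree_eq_bot]
          simpa using hQ
        simp [this]
      · have h2 : Q.natDegree < N := by
          by_cases hq : Q = 0
          · simpa [hq] using h0
          · exact (natDegree_lt_iff_degree_lt hq).2 hQ
        exact as_sum_range_C_mul_X_pow' Q h2
    conv_rhs => rw [h1]
    rw [Finset.mul_sum]
    refine Finset.sum_congr rfl fun t ht => ?_
    rw [Finset.mem_range] at ht
    have : (q * N + t) % N = t := by
      rw [Nat.mul_comm, Nat.mul_add_mod, Nat.mod_eq_of_lt ht]
    rw [this, pow_add, ← pow_mul, Nat.mul_comm N q]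
    ring

lemma bd_geom (p : ℕ) [Fact p.Prime] [CharP F p] (s k : ℕ) :
    ∑ l ∈ Finset.range (p ^ k), (X ^ (p ^ s) : F[X]) ^ l
      = (X - 1) ^ (p ^ (s + k) - p ^ s) := by
  have hX : (X - 1 : F[X]) ≠ 0 := by
    simpa using X_sub_C_ne_zero (1 : F)
  have h := geom_sum_mul (X ^ (p ^ s) : F[X]) (p ^ k)
  have e1 : (X ^ (p ^ s) : F[X]) - 1 = (X - 1) ^ (p ^ s) := by
    rw [sub_pow_char_pow, one_pow]
  have e2 : ((X ^ (p ^ s)) ^ (p ^ k) : F[X]) - 1 = (X - 1) ^ (p ^ (s + k)) := by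
    rw [sub_pow_char_pow, one_pow, ← pow_mul, pow_add]
  rw [e1, e2] at h
  have hle : p ^ s ≤ p ^ (s + k) := Nat.pow_le_pow_right (Fact.out : p.Prime).pos (by omega)
  apply mul_right_cancel₀ (pow_ne_zero (p ^ s) hX)
  rw [h, ← pow_add, Nat.sub_add_cancel hle]

/-- the shifted window polynomial -/
lemma bd_shift (p : ℕ) [Fact p.Prime] [CharP F p] (s i : ℕ) (hi : i ≤ p ^ s) (a : ℕ → F)
    (ha : ∀ j, a (j + p ^ s) = a j)
    (h0 : (X - 1 : F[X]) ^ i ∣ ∑ t ∈ Finset.range (p ^ s), C (a t) * X ^ t) (u : ℕ) :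
    (X - 1 : F[X]) ^ i ∣ ∑ t ∈ Finset.range (p ^ s), C (a (u + t)) * X ^ t := by
  induction u with
  | zero => simpa using h0
  | succ u ih =>
    have hc : IsCoprime ((X - 1 : F[X]) ^ i) X := by
      apply IsCoprime.pow_left
      exact ⟨-1, 1, by ring⟩
    apply hc.dvd_of_dvd_mul_left
    have key : X * ∑ t ∈ Finset.range (p ^ s), C (a (u + 1 + t)) * X ^ t
        = ∑ t ∈ Finset.range (p ^ s), C (a (u + t)) * X ^ t
          + C (a u) * (X - 1) ^ (p ^ s) := by
      have e1 := Finset.sum_range_succ (fun t => C (a (u + t)) * (X : F[X]) ^ t) (p ^ s)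
      rw [Finset.sum_range_succ'] at e1
      rw [ha u] at e1
      have e2 : X * ∑ t ∈ Finset.range (p ^ s), C (a (u + 1 + t)) * X ^ t
          = ∑ t ∈ Finset.range (p ^ s), C (a (u + (t + 1))) * X ^ (t + 1) := by
        rw [Finset.mul_sum]
        refine Finset.sum_congr rfl fun t _ => ?_
        rw [show u + 1 + t = u + (t + 1) by ring]
        ring
      rw [e2, sub_pow_char_pow, one_pow]
      simp only [add_zero, pow_zero, mul_one] at e1
      linear_combination e1
    rw [key]
    exact dvd_add ih (Dvd.dvd.mul_left (pow_dvd_pow _ hi) _)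

lemma bd_span (i l h : ℕ) (R : F[X]) (hR : R ≠ 0) (hd : (X - 1 : F[X]) ^ i ∣ R)
    (hl : ∀ t < l, R.coeff t = 0) (hh : R.natDegree ≤ h) : l + i ≤ h := by
  obtain ⟨S, rfl⟩ := X_pow_dvd_iff.2 hl
  have hc : IsCoprime ((X - 1 : F[X]) ^ i) (X ^ l) := by
    apply IsCoprime.pow
    exact ⟨-1, 1, by ring⟩
  have hS : S ≠ 0 := right_ne_zero_of_mul hR
  have h1 := natDegree_le_of_dvd (hc.dvd_of_dvd_mul_left hd) hS
  have h2 : ((X - 1 : F[X]) ^ i).natDegree = i := by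
    rw [natDegree_pow]
    have : (X - 1 : F[X]).natDegree = 1 := by simpa using natDegree_X_sub_C (1 : F)
    rw [this, mul_one]
  rw [natDegree_mul (pow_ne_zero _ X_ne_zero) hS, natDegree_X_pow] at hh
  omega

open Classical in
lemma bd_lower (p : ℕ) [Fact p.Prime] [CharP F p] (s i b : ℕ) (hbi : b + i ≤ p ^ s)
    (hib : i ≤ b) (hb : 0 < b) (a : ℕ → F)
    (ha : ∀ j, a (j + p ^ s) = a j)
    (h0 : (X - 1 : F[X]) ^ i ∣ ∑ t ∈ Finset.range (p ^ s), C (a t) * X ^ t)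
    (hne : ∃ j, a j ≠ 0) :
    b + i ≤ (p ^ s).count (fun j => ∃ t < b, a (j + t) ≠ 0) := by
  set N := p ^ s with hN
  have hper : Function.Periodic (fun j => ∃ t < b, a (j + t) ≠ 0) N := by
    intro j
    simp only [show ∀ t, j + N + t = (j + t) + N by intro t; ring, ha]
  by_cases hall : ∀ j, ∃ t < b, a (j + t) ≠ 0
  · rw [Nat.count_eq_card_filter_range, Finset.filter_true_of_mem (fun j _ => hall j)]
    simpa using hbi
  push Not at hall
  obtain ⟨u, hu⟩ := hall
  have hcount := Nat.filter_Ico_card_eq_of_periodic u N _ hper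
  rw [← hcount]
  have hdv := bd_shift p s i (by omega) a ha h0 u
  rw [← hN] at hdv
  set R : F[X] := ∑ t ∈ Finset.range N, C (a (u + t)) * X ^ t with hRdef
  have hco : ∀ t, R.coeff t = if t < N then a (u + t) else 0 := by
    intro t
    simp [hRdef, coeff_C_mul, coeff_X_pow]
  have hNpos : 0 < N := by omega
  have hRne : R ≠ 0 := by
    intro hR
    obtain ⟨j, hj⟩ := hne
    have hP : Function.Periodic a N := ha
    have : a (u + (j + (N - u % N)) % N) = a j := by
      have e : (u + (j + (N - u % N)) % N) % N = j % N := by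
        have h1 : u % N < N := Nat.mod_lt _ hNpos
        have h2 : u + (j + (N - u % N)) = j + N * (u / N + 1) := by
          have := Nat.div_add_mod u N
          rw [Nat.mul_add]
          omega
        rw [Nat.add_mod_mod, h2, Nat.add_mul_mod_self_left]
      rw [← hP.map_mod_nat j, ← hP.map_mod_nat (u + _), e]
    apply hj
    rw [← this]
    have h3 := hco ((j + (N - u % N)) % N)
    rw [hR, if_pos (Nat.mod_lt _ hNpos)] at h3
    simpa using h3.symm
  set h := R.natDegree with hh
  have hex : ∃ t, R.coeff t ≠ 0 := ⟨h, by simpa [hh] using hRne⟩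
  set l := Nat.find hex with hldef
  have hl1 : R.coeff l ≠ 0 := Nat.find_spec hex
  have hl2 : ∀ t < l, R.coeff t = 0 := fun t ht => by
    simpa using Nat.find_min hex ht
  have hh1 : R.coeff h ≠ 0 := by simpa [hh] using hRne
  have hspan := bd_span i l h R hRne hdv hl2 le_rfl
  have hlN : l < N := by
    by_contra hc
    exact hl1 (by rw [hco, if_neg hc])
  have hhN : h < N := by
    by_contra hc
    exact hh1 (by rw [hco, if_neg hc])
  have hla : a (u + l) ≠ 0 := by rw [hco, if_pos hlN] at hl1; exact hl1
  have hha : a (u + h) ≠ 0 := by rw [hco, if_pos hhN] at hh1; exact hh1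
  have hlb : b ≤ l := by
    by_contra hc
    exact hla (hu l (by omega))
  have hmem : ∀ w, w < N → a (u + w) ≠ 0 → b ≤ w → ∀ x, u + w - (b - 1) ≤ x → x ≤ u + w →
      x ∈ (Finset.Ico u (u + N)).filter (fun j => ∃ t < b, a (j + t) ≠ 0) := by
    intro w hw haw hbw x hx1 hx2
    rw [Finset.mem_filter, Finset.mem_Ico]
    refine ⟨⟨by omega, by omega⟩, u + w - x, by omega, ?_⟩
    rwa [show x + (u + w - x) = u + w by omega]
  by_cases hcase : h ≤ l + b
  · have hsub : Finset.Icc (u + l - (b - 1)) (u + h) ⊆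
        (Finset.Ico u (u + N)).filter (fun j => ∃ t < b, a (j + t) ≠ 0) := by
      intro x hx
      rw [Finset.mem_Icc] at hx
      by_cases hxl : x ≤ u + l
      · exact hmem l hlN hla hlb x hx.1 hxl
      · exact hmem h hhN hha (by omega) x (by omega) hx.2
    have := Finset.card_le_card hsub
    rw [Nat.card_Icc] at this
    omega
  · have hsub : Finset.Icc (u + l - (b - 1)) (u + l) ∪ Finset.Icc (u + h - (b - 1)) (u + h) ⊆
        (Finset.Ico u (u + N)).filter (fun j => ∃ t < b, a (j + t) ≠ 0) := by
      intro x hx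
      rw [Finset.mem_union, Finset.mem_Icc, Finset.mem_Icc] at hx
      rcases hx with hx | hx
      · exact hmem l hlN hla hlb x hx.1 hx.2
      · exact hmem h hhN hha (by omega) x hx.1 hx.2
    have := Finset.card_le_card hsub
    rw [Finset.card_union_of_disjoint, Nat.card_Icc, Nat.card_Icc] at this
    · omega
    · rw [Finset.disjoint_left]
      intro x hx1 hx2
      rw [Finset.mem_Icc] at hx1 hx2
      omega

lemma bd_count_mul (P : ℕ → Prop) [DecidablePred P] (N q : ℕ) (h : Function.Periodic P N) :
    (q * N).count P = q * N.count P := by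
  induction q with
  | zero => simp
  | succ q ih =>
    rw [Nat.succ_mul, Nat.count_add, ih, Nat.succ_mul]
    congr 2
    funext t
    have := (h.nat_mul q) t
    rw [add_comm]
    simpa using this

end helpers

lemma bd_mem (p m s k i : ℕ) [Fact p.Prime] (hi : i ≤ p ^ s)
    (c : Fin (p ^ (s + k)) → GaloisField p m) :
    c ∈ Ccode p m (s + k) (p ^ (s + k) - p ^ s + i) ↔
      ∃ Q : (GaloisField p m)[X], Q.degree < (p ^ s : ℕ) ∧ (X - 1) ^ i ∣ Q ∧
        ∀ j, c j = Q.coeff ((j : ℕ) % p ^ s) := by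
  have hle : p ^ s ≤ p ^ (s + k) := Nat.pow_le_pow_right (Fact.out : p.Prime).pos (by omega)
  have hsum : ∀ Q : (GaloisField p m)[X], Q.degree < (p ^ s : ℕ) →
      ∑ j : Fin (p ^ (s + k)), C (Q.coeff ((j : ℕ) % p ^ s)) * X ^ (j : ℕ)
        = (X - 1) ^ (p ^ (s + k) - p ^ s) * Q := by
    intro Q hQ
    rw [← bd_geom p s k, ← bd_rep _ Q hQ, Finset.sum_range, ]
    have : p ^ (s + k) = p ^ k * p ^ s := by rw [pow_add, mul_comm]
    rw [Fin.sum_univ_eq_sum_range (fun j => C (Q.coeff (j % p ^ s)) * X ^ j),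
      Fin.sum_univ_eq_sum_range (fun j => C (Q.coeff (j % p ^ s)) * X ^ j), this]
  have hmonic : ((X - 1 : (GaloisField p m)[X]) ^ (p ^ (s + k) - p ^ s)).Monic := by
    apply Monic.pow
    simpa using monic_X_sub_C (1 : GaloisField p m)
  constructor
  · rintro ⟨f, hf⟩
    set P : (GaloisField p m)[X] := ∑ j : Fin (p ^ (s + k)), C (c j) * X ^ (j : ℕ) with hP
    have hX : (X ^ p ^ (s + k) - 1 : (GaloisField p m)[X]) = (X - 1) ^ (p ^ (s + k)) := by
      rw [sub_pow_char_pow, one_pow]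
    rw [hX] at hf
    have hd : (X - 1) ^ (p ^ (s + k) - p ^ s + i) ∣ P := by
      have h1 := (pow_dvd_pow (X - 1 : (GaloisField p m)[X])
        (show p ^ (s + k) - p ^ s + i ≤ p ^ (s + k) by omega)).trans hf
      exact (dvd_sub_left (Dvd.intro _ rfl)).1 h1
    obtain ⟨g, hg⟩ := hd
    rw [pow_add, mul_assoc] at hg
    have hPdeg : P.degree < (p ^ (s + k) : ℕ) := by
      rw [hP]
      exact degree_sum_fin_lt c
    have hQdeg : ((X - 1 : (GaloisField p m)[X]) ^ i * g).degree < (p ^ s : ℕ) := by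
      by_cases hz : (X - 1) ^ i * g = 0
      · rw [hz, degree_zero]; exact WithBot.bot_lt_coe _
      · have hPne : P ≠ 0 := by
          rw [hg]; exact mul_ne_zero hmonic.ne_zero hz
        rw [← natDegree_lt_iff_degree_lt hPne, hg, natDegree_mul hmonic.ne_zero hz,
          natDegree_pow] at hPdeg
        have h1 : (X - 1 : (GaloisField p m)[X]).natDegree = 1 := by
          simpa using natDegree_X_sub_C (1 : GaloisField p m)
        rw [h1] at hPdeg
        rw [← natDegree_lt_iff_degree_lt hz]
        omega
    refine ⟨_, hQdeg, Dvd.intro _ rfl, fun j => ?_⟩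
    have h2 := hsum _ hQdeg
    rw [← hg, hP] at h2
    have h3 := congrArg (fun R => R.coeff (j : ℕ)) h2
    simp only [finsetSum_coeff, coeff_C_mul, coeff_X_pow, mul_ite, mul_one, mul_zero,
      Fin.val_inj, Finset.sum_ite_eq, Finset.mem_univ, if_true] at h3
    exact h3.symm
  · rintro ⟨Q, hQ, ⟨g, hg⟩, hc⟩
    refine ⟨g, ?_⟩
    simp only [hc]
    rw [hsum Q hQ, hg, pow_add (X - 1) _ i, mul_assoc, sub_self]
    exact dvd_zero _

open Classical in
lemma bd_weight {F : Type*} [Field F] (n N q b : ℕ) (hn : n = q * N)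
    (x y : Fin n → F) (a : ℕ → F) (ha : ∀ j, a (j + N) = a j)
    (hxy : ∀ j : Fin n, x j - y j = a j) :
    hammingDist (piB b x) (piB b y)
      = q * N.count (fun j => ∃ t < b, a (j + t) ≠ 0) := by
  have hP : Function.Periodic a n := by
    have h1 : Function.Periodic a N := ha
    rw [hn]
    simpa using h1.nat_mul q
  have hper : Function.Periodic (fun j => ∃ t < b, a (j + t) ≠ 0) N := by
    intro j
    simp only [show ∀ t, j + N + t = (j + t) + N by intro t; ring, ha]
  rw [← bd_count_mul _ _ _ hper, ← hn, Nat.count_eq_card_filter_range, hammingDist]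
  have hset : (Finset.range n).filter (fun j => ∃ t < b, a (j + t) ≠ 0)
      = ((Finset.univ : Finset (Fin n)).filter
          (fun j : Fin n => ∃ t < b, a ((j : ℕ) + t) ≠ 0)).map Fin.valEmbedding := by
    ext j
    simp only [Finset.mem_filter, Finset.mem_range, Finset.mem_map, Finset.mem_univ, true_and,
      Fin.valEmbedding_apply]
    constructor
    · rintro ⟨h1, h2⟩
      exact ⟨⟨j, h1⟩, h2, rfl⟩
    · rintro ⟨j', h2, rfl⟩
      exact ⟨j'.2, h2⟩
  rw [hset, Finset.card_map]
  congr 1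
  ext j
  simp only [Finset.mem_filter, Finset.mem_univ, true_and]
  rw [Function.ne_iff]
  constructor
  · rintro ⟨t, ht⟩
    refine ⟨t, t.2, ?_⟩
    rw [← hP.map_mod_nat]
    have := hxy ⟨((j : ℕ) + (t : ℕ)) % n, Nat.mod_lt _ j.pos⟩
    simp only at this
    rw [← this]
    exact sub_ne_zero.2 ht
  · rintro ⟨t, htb, ht⟩
    refine ⟨⟨t, htb⟩, ?_⟩
    rw [← hP.map_mod_nat] at ht
    have := hxy ⟨((j : ℕ) + (t : ℕ)) % n, Nat.mod_lt _ j.pos⟩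
    simp only at this
    rw [← this] at ht
    exact sub_ne_zero.1 ht

theorem b_distance_high_degree (p m e k : ℕ) [Fact p.Prime] (hm : 0 < m)
    (he : 2 ≤ e) (hk1 : 1 ≤ k) (hk2 : k ≤ e - 1) (b : ℕ) (hb2 : 2 ≤ b)
    (i : ℕ) (hi : i ≤ p ^ (e - k - 1)) (hbi : b + i ≤ p ^ (e - k))
    (hib : i ≤ b) :
    dBcode b (Ccode p m e (p ^ e - p ^ (e - k) + i)) = p ^ k * (b + i) := by
  classical
  obtain ⟨s, rfl⟩ : ∃ s, e = s + k := ⟨e - k, by omega⟩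
  rw [Nat.add_sub_cancel] at *
  clear hi
  have hn : p ^ (s + k) = p ^ k * p ^ s := by rw [pow_add, mul_comm]
  have hip : i ≤ p ^ s := by omega
  have hNpos : 0 < p ^ s := by omega
  have hlow : ∀ x ∈ Ccode p m (s + k) (p ^ (s + k) - p ^ s + i),
      ∀ y ∈ Ccode p m (s + k) (p ^ (s + k) - p ^ s + i), x ≠ y →
      p ^ k * (b + i) ≤ hammingDist (piB b x) (piB b y) := by
    intro x hx y hy hxy
    obtain ⟨Q, hQ1, hQ2, hQ3⟩ := (bd_mem p m s k i hip x).1 hx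
    obtain ⟨S, hS1, hS2, hS3⟩ := (bd_mem p m s k i hip y).1 hy
    have hdeg : (Q - S).degree < (p ^ s : ℕ) :=
      (degree_sub_le _ _).trans_lt (max_lt hQ1 hS1)
    have ha : ∀ j, (Q - S).coeff ((j + p ^ s) % p ^ s) = (Q - S).coeff (j % p ^ s) := by
      intro j; rw [Nat.add_mod_right]
    rw [bd_weight (p ^ (s + k)) (p ^ s) (p ^ k) b hn x y
      (fun j => (Q - S).coeff (j % p ^ s)) ha (by intro j; simp [hQ3, hS3])]
    refine Nat.mul_le_mul_left _ (bd_lower p s i b hbi hib (by omega)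
      (fun j => (Q - S).coeff (j % p ^ s)) ha ?_ ?_)
    · have h1 := bd_rep (p ^ s) (Q - S) hdeg 1
      simp only [one_mul, Finset.sum_range_one, pow_zero] at h1
      rw [h1]
      exact dvd_sub hQ2 hS2
    · obtain ⟨j, hj⟩ := Function.ne_iff.1 hxy
      refine ⟨j, ?_⟩
      rw [coeff_sub, ← hQ3, ← hS3]
      exact sub_ne_zero.2 hj
  have hX1 : (X - 1 : (GaloisField p m)[X]).Monic := by
    simpa using monic_X_sub_C (1 : GaloisField p m)
  have hnd : ((X - 1 : (GaloisField p m)[X]) ^ i).natDegree = i := by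
    rw [natDegree_pow]
    have : (X - 1 : (GaloisField p m)[X]).natDegree = 1 := by
      simpa using natDegree_X_sub_C (1 : GaloisField p m)
    rw [this, mul_one]
  have hdeg : ((X - 1 : (GaloisField p m)[X]) ^ i).degree < (p ^ s : ℕ) := by
    rw [← natDegree_lt_iff_degree_lt (hX1.pow i).ne_zero, hnd]
    omega
  set c : Fin (p ^ (s + k)) → GaloisField p m :=
    fun j => ((X - 1 : (GaloisField p m)[X]) ^ i).coeff ((j : ℕ) % p ^ s) with hc
  have hcmem : c ∈ Ccode p m (s + k) (p ^ (s + k) - p ^ s + i) :=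
    (bd_mem p m s k i hip c).2 ⟨_, hdeg, dvd_rfl, fun j => rfl⟩
  have h0mem : (0 : Fin (p ^ (s + k)) → GaloisField p m) ∈
      Ccode p m (s + k) (p ^ (s + k) - p ^ s + i) :=
    (bd_mem p m s k i hip 0).2 ⟨0, by rw [degree_zero]; exact WithBot.bot_lt_coe _,
      dvd_zero _, fun j => by simp⟩
  have hilt : i < p ^ s := by omega
  have hle : p ^ s ≤ p ^ (s + k) := Nat.pow_le_pow_right (Fact.out : p.Prime).pos (by omega)
  have hc0 : c ≠ 0 := by
    intro h
    have h1 := congrFun h ⟨i, by omega⟩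
    simp only [hc, Pi.zero_apply, Nat.mod_eq_of_lt hilt] at h1
    have h2 := (hX1.pow i).coeff_natDegree
    rw [hnd, h1] at h2
    exact zero_ne_one h2
  have hup : hammingDist (piB b c) (piB b 0) ≤ p ^ k * (b + i) := by
    rw [bd_weight (p ^ (s + k)) (p ^ s) (p ^ k) b hn c 0
      (fun j => ((X - 1 : (GaloisField p m)[X]) ^ i).coeff (j % p ^ s))
      (by intro j; simp) (by intro j; simp [hc])]
    refine Nat.mul_le_mul_left _ ?_
    rw [Nat.count_eq_card_filter_range]
    have hsub : (Finset.range (p ^ s)).filter (fun j => ∃ t < b,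
        ((X - 1 : (GaloisField p m)[X]) ^ i).coeff ((j + t) % p ^ s) ≠ 0) ⊆
        Finset.range (i + 1) ∪ Finset.Ico (p ^ s - (b - 1)) (p ^ s) := by
      intro j hj
      rw [Finset.mem_filter, Finset.mem_range] at hj
      obtain ⟨hj1, t, ht, hj2⟩ := hj
      rw [Finset.mem_union, Finset.mem_range, Finset.mem_Ico]
      by_contra hcon
      apply hj2
      rw [Nat.mod_eq_of_lt (by omega)]
      apply coeff_eq_zero_of_natDegree_lt
      rw [hnd]
      omega
    have h1 := (Finset.card_le_card hsub).trans (Finset.card_union_le _ _)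
    rw [Finset.card_range, Nat.card_Ico] at h1
    omega
  unfold dBcode
  apply le_antisymm
  · refine le_trans (Nat.sInf_le ⟨c, hcmem, 0, h0mem, hc0, rfl⟩) ?_
    convert hup
  · refine le_csInf ⟨_, c, hcmem, 0, h0mem, hc0, rfl⟩ ?_
    rintro d ⟨x, hx, y, hy, hxy, rfl⟩
    have := hlow x hx y hy hxy
    convert this
end
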